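/- arXiv:2102.11049 — 3 statements merged into one kernel-verified Lean document; each statement's English description precedes it below -/
import Mathlib

section
/- Assume the coordinate ordering condition. Define p_n*(i) = λ(i^{(1)})^{s_1}·Π_{ℓ=2}^n λ(i^{(ℓ)})^{s_ℓ−s_{ℓ−1}} for i ∈ I_n (so each p_n* is a probability vector on I_n by the defining equations of the s_n), and set P* = (p_d*; p_{d−1}*; …; p_1*). Then for every P = (p_d; …; p_1) ∈ P_{1,…,d}, Σ_{n=1}^d C_n^{(d)}(P)·H(p_n) ≤ s_d, with equality if and only if P = P*. -/
open Real Finset Filter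

noncomputable section

/-- Index sets of a Gatzouras–Lalley structure. -/
def glIdx (Nf : List ℕ → ℕ) : ℕ → Finset (List ℕ)
  | 0 => {[]}
  | n + 1 => (glIdx Nf n).biUnion fun u =>
      (Finset.range (Nf u)).image fun j => u ++ [j + 1]

/-- Entropy of a vector `p` on index set `I`. -/
def glEnt (I : Finset (List ℕ)) (p : List ℕ → ℝ) : ℝ :=
  -∑ i ∈ I, p i * Real.log (p i)

/-- Lyapunov exponent `χ_ℓ(p)` for `p` on index set `I`. -/
def glLyap (lam : List ℕ → ℝ) (I : Finset (List ℕ)) (ℓ : ℕ) (p : List ℕ → ℝ) : ℝ :=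
  -∑ i ∈ I, p i * Real.log (lam (i.take ℓ))

def IsProbVec (I : Finset (List ℕ)) (p : List ℕ → ℝ) : Prop :=
  (∀ i ∈ I, 0 ≤ p i) ∧ ∑ i ∈ I, p i = 1

/-- `glCaux d χ k = C^{(d)}_{d-k}`, defined by downward recursion. -/
def glCaux (d : ℕ) (chi : ℕ → ℕ → ℝ) : ℕ → ℝ
  | k => (1 - ∑ j ∈ (Finset.range k).attach,
        glCaux d chi j.1 * chi (d - k) (d - j.1)) / chi (d - k) (d - k)
decreasing_by exact Finset.mem_range.mp j.2

/-- The coefficient `C_n^{(d)}(P)`. -/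
def glC (d : ℕ) (lam : List ℕ → ℝ) (Nf : List ℕ → ℕ) (P : ℕ → List ℕ → ℝ) (n : ℕ) : ℝ :=
  glCaux d (fun a m => glLyap lam (glIdx Nf m) a (P m)) (d - n)

/-- Smallest number of sets of diameter at most `δ` needed to cover `Λ`. -/
def coverNum {E : Type*} [EMetricSpace E] (Λ : Set E) (δ : ℝ) : ℕ :=
  sInf {m : ℕ | ∃ U : Fin m → Set E,
    (∀ k, EMetric.diam (U k) ≤ ENNReal.ofReal δ) ∧ Λ ⊆ ⋃ k, U k}

/-- The affine map `S_i` of a Gatzouras–Lalley system. -/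
def glMap (d : ℕ) (lam t : List ℕ → ℝ) (i : List ℕ) (x : EuclideanSpace ℝ (Fin d)) :
    EuclideanSpace ℝ (Fin d) :=
  WithLp.toLp 2 fun k => lam (i.take ((k : ℕ) + 1)) * x k + t (i.take ((k : ℕ) + 1))

def openCube (d : ℕ) : Set (EuclideanSpace ℝ (Fin d)) := {x | ∀ k, x k ∈ Set.Ioo (0:ℝ) 1}

def closedCube (d : ℕ) : Set (EuclideanSpace ℝ (Fin d)) := {x | ∀ k, x k ∈ Set.Icc (0:ℝ) 1}


/-- The probability vector `p_n^*` on `I_n`: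
`p_n^*(i) = λ(i^{(1)})^{s_1}·∏_{ℓ=2}^n λ(i^{(ℓ)})^{s_ℓ-s_{ℓ-1}}` (with `s_0 = 0`). -/
def glPstar (lam : List ℕ → ℝ) (s : ℕ → ℝ) (n : ℕ) (i : List ℕ) : ℝ :=
  ∏ ℓ ∈ Finset.Icc 1 n, lam (i.take ℓ) ^ (s ℓ - s (ℓ - 1))

/-- The objective `∑_{n=1}^d C_n^{(d)}(P) · H(p_n)` of the variational formula. -/
def glObj (d : ℕ) (lam : List ℕ → ℝ) (Nf : List ℕ → ℕ) (P : ℕ → List ℕ → ℝ) : ℝ :=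
  ∑ n ∈ Finset.Icc 1 d, glC d lam Nf P n * glEnt (glIdx Nf n) (P n)

/-!
By Gibbs' inequality, `H(p_n)` is at most the cross entropy of `p_n` relative to `p_n^*`, with
equality exactly when `p_n = p_n^*`. As `log p_n^*` is a linear combination of the
`log λ(i^{(ℓ)})`, this cross entropy is `∑_{ℓ ≤ n} (s_ℓ - s_{ℓ-1}) χ_ℓ(p_n)`. The recursion for
the coefficients reads `∑_{m ≥ ℓ} C_m χ_ℓ(p_m) = 1` for every `ℓ`, so after exchanging the order
of summation the upper bounds, weighted by the `C_n`, telescope to `s_d`. The weights preserve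
strictness because they are positive: coordinate ordering gives `χ_ℓ(p_m) < χ_{ℓ+1}(p_m)`, whence
`∑_{m > ℓ} C_m χ_ℓ(p_m) < ∑_{m > ℓ} C_m χ_{ℓ+1}(p_m) = 1`.
-/

open InformationTheory (klFun klFun_nonneg klFun_eq_zero_iff)

section FiniteSums

variable {ι : Type*} {t : Finset ι}

lemma sum_mul_lt_sum_mul {R : Type*} [Semiring R] [PartialOrder R] [IsStrictOrderedRing R]
    {w f g : ι → R} (hw : ∀ i ∈ t, 0 ≤ w i) (hw0 : ∑ i ∈ t, w i ≠ 0)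
    (hfg : ∀ i ∈ t, f i < g i) : ∑ i ∈ t, w i * f i < ∑ i ∈ t, w i * g i := by
  obtain ⟨k, hk, hwk⟩ := exists_ne_zero_of_sum_ne_zero hw0
  exact sum_lt_sum (fun i hi => mul_le_mul_of_nonneg_left (hfg i hi).le (hw i hi))
    ⟨k, hk, mul_lt_mul_of_pos_left (hfg k hk) ((hw k hk).lt_of_ne' hwk)⟩

lemma mul_klFun_div {p q : ℝ} (hq : q ≠ 0) :
    q * klFun (p / q) = p * log p - p * log q + (q - p) := by
  rcases eq_or_ne p 0 with rfl | hp
  · simp [klFun]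
  · rw [klFun, log_div hp hq]
    field_simp
    ring

variable {p q : ι → ℝ}

lemma sum_mul_klFun_div (hq : ∀ i ∈ t, q i ≠ 0) (hpq : ∑ i ∈ t, p i = ∑ i ∈ t, q i) :
    ∑ i ∈ t, q i * klFun (p i / q i) =
      ∑ i ∈ t, p i * log (p i) - ∑ i ∈ t, p i * log (q i) := by
  rw [sum_congr rfl fun i hi => mul_klFun_div (hq i hi), sum_add_distrib, sum_sub_distrib,
    sum_sub_distrib, hpq, sub_self, add_zero]

lemma sum_mul_log_le_sum_mul_log_self (hp : ∀ i ∈ t, 0 ≤ p i) (hq : ∀ i ∈ t, 0 < q i)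
    (hpq : ∑ i ∈ t, p i = ∑ i ∈ t, q i) :
    ∑ i ∈ t, p i * log (q i) ≤ ∑ i ∈ t, p i * log (p i) := by
  rw [← sub_nonneg, ← sum_mul_klFun_div (fun i hi => (hq i hi).ne') hpq]
  exact sum_nonneg fun i hi =>
    mul_nonneg (hq i hi).le (klFun_nonneg (div_nonneg (hp i hi) (hq i hi).le))

lemma sum_mul_log_self_eq_sum_mul_log_iff (hp : ∀ i ∈ t, 0 ≤ p i) (hq : ∀ i ∈ t, 0 < q i)
    (hpq : ∑ i ∈ t, p i = ∑ i ∈ t, q i) :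
    ∑ i ∈ t, p i * log (p i) = ∑ i ∈ t, p i * log (q i) ↔ ∀ i ∈ t, p i = q i := by
  have hdiv : ∀ i ∈ t, 0 ≤ p i / q i := fun i hi => div_nonneg (hp i hi) (hq i hi).le
  rw [← sub_eq_zero, ← sum_mul_klFun_div (fun i hi => (hq i hi).ne') hpq,
    sum_eq_zero_iff_of_nonneg fun i hi => mul_nonneg (hq i hi).le (klFun_nonneg (hdiv i hi))]
  refine forall₂_congr fun i hi => ?_
  rw [mul_eq_zero_iff_left (hq i hi).ne', klFun_eq_zero_iff (hdiv i hi),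
    div_eq_one_iff_eq (hq i hi).ne']

lemma sum_Icc_sub_pred {G : Type*} [AddCommGroup G] (s : ℕ → G) (d : ℕ) :
    ∑ ℓ ∈ Icc 1 d, (s ℓ - s (ℓ - 1)) = s d - s 0 := by
  induction d with
  | zero => simp
  | succ d ih =>
    rw [sum_Icc_succ_top d.succ_pos, ih, Nat.add_sub_cancel, sub_add_sub_cancel']

lemma sum_mul_sum_sub_pred_mul {R : Type*} [CommRing R] {d : ℕ} {C s : ℕ → R} {χ : ℕ → ℕ → R}
    (hC : ∀ ℓ ∈ Icc 1 d, ∑ n ∈ Icc ℓ d, C n * χ ℓ n = 1) :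
    ∑ n ∈ Icc 1 d, C n * ∑ ℓ ∈ Icc 1 n, (s ℓ - s (ℓ - 1)) * χ ℓ n = s d - s 0 := by
  calc ∑ n ∈ Icc 1 d, C n * ∑ ℓ ∈ Icc 1 n, (s ℓ - s (ℓ - 1)) * χ ℓ n
      = ∑ n ∈ Icc 1 d, ∑ ℓ ∈ Icc 1 n, (s ℓ - s (ℓ - 1)) * (C n * χ ℓ n) := by
        simp only [mul_sum, mul_left_comm]
    _ = ∑ ℓ ∈ Icc 1 d, ∑ n ∈ Icc ℓ d, (s ℓ - s (ℓ - 1)) * (C n * χ ℓ n) :=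
        sum_comm' fun n ℓ => by simp only [mem_Icc]; omega
    _ = ∑ ℓ ∈ Icc 1 d, (s ℓ - s (ℓ - 1)) :=
        sum_congr rfl fun ℓ hℓ => by rw [← mul_sum, hC ℓ hℓ, mul_one]
    _ = s d - s 0 := sum_Icc_sub_pred s d

end FiniteSums

section Indices

variable {Nf : List ℕ → ℕ} {m n : ℕ} {i : List ℕ}

lemma mem_glIdx_succ :
    i ∈ glIdx Nf (n + 1) ↔ ∃ u ∈ glIdx Nf n, ∃ j < Nf u, u ++ [j + 1] = i := by
  simp only [glIdx, mem_biUnion, mem_image, mem_range]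

lemma length_of_mem_glIdx (hi : i ∈ glIdx Nf n) : i.length = n := by
  induction n generalizing i with
  | zero => simpa [glIdx] using hi
  | succ n ih =>
    obtain ⟨u, hu, j, -, rfl⟩ := mem_glIdx_succ.1 hi
    simp [ih hu]

lemma take_append_of_mem_glIdx (hi : i ∈ glIdx Nf n) (hmn : m ≤ n) (v : List ℕ) :
    (i ++ v).take m = i.take m :=
  List.take_append_of_le_length (hmn.trans_eq (length_of_mem_glIdx hi).symm)

lemma take_mem_glIdx (hmn : m ≤ n) (hi : i ∈ glIdx Nf n) : i.take m ∈ glIdx Nf m := by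
  induction n, hmn using Nat.le_induction generalizing i with
  | base => rwa [List.take_of_length_le (length_of_mem_glIdx hi).le]
  | succ n hmn ih =>
    obtain ⟨u, hu, j, -, rfl⟩ := mem_glIdx_succ.1 hi
    rw [take_append_of_mem_glIdx hu hmn]
    exact ih hu

lemma exists_mem_glIdx_take_eq (hmn : m ≤ n) (hNf : ∀ k < n, ∀ u ∈ glIdx Nf k, 1 ≤ Nf u)
    (hi : i ∈ glIdx Nf m) : ∃ v ∈ glIdx Nf n, v.take m = i := by
  induction n, hmn using Nat.le_induction with
  | base => exact ⟨i, hi, List.take_of_length_le (length_of_mem_glIdx hi).le⟩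
  | succ n hmn ih =>
    obtain ⟨v, hv, hvi⟩ := ih fun k hk => hNf k (hk.trans n.lt_succ_self)
    exact ⟨v ++ [1], mem_glIdx_succ.2 ⟨v, hv, 0, hNf n n.lt_succ_self v hv, rfl⟩,
      (take_append_of_mem_glIdx hv hmn _).trans hvi⟩

end Indices

section Coefficients

variable {d n : ℕ} {χ : ℕ → ℕ → ℝ}

lemma glCaux_sub (hn : n ≤ d) :
    glCaux d χ (d - n) = (1 - ∑ m ∈ Ioc n d, glCaux d χ (d - m) * χ n m) / χ n n := by
  have hreindex : ∑ j ∈ range (d - n), glCaux d χ j * χ n (d - j) =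
      ∑ m ∈ Ioc n d, glCaux d χ (d - m) * χ n m := by
    refine sum_nbij' (d - ·) (d - ·) ?_ ?_ ?_ ?_ ?_ <;> grind
  rw [glCaux, sum_attach (range (d - n)) fun j => glCaux d χ j * χ (d - (d - n)) (d - j),
    Nat.sub_sub_self hn, hreindex]

lemma sum_glCaux_mul_eq_one (hn : n ≤ d) (hχ : χ n n ≠ 0) :
    ∑ m ∈ Icc n d, glCaux d χ (d - m) * χ n m = 1 := by
  rw [← add_sum_Ioc_eq_sum_Icc hn, glCaux_sub hn, div_mul_cancel₀ _ hχ, sub_add_cancel]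

lemma glCaux_sub_pos (hn : n ≤ d) (hdiag : ∀ m, n ≤ m → m ≤ d → 0 < χ m m)
    (hlt : ∀ k m, n ≤ k → k < m → m ≤ d → χ k m < χ (k + 1) m) :
    0 < glCaux d χ (d - n) := by
  induction hk : d - n using Nat.strong_induction_on generalizing n with
  | _ k ih =>
    subst hk
    rw [glCaux_sub hn]
    refine div_pos (sub_pos.2 ?_) (hdiag n le_rfl hn)
    rcases hn.eq_or_lt with rfl | hnd
    · simp
    have hpos : ∀ m ∈ Ioc n d, 0 < glCaux d χ (d - m) := fun m hm => by
      obtain ⟨hnm, hmd⟩ := mem_Ioc.1 hm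
      exact ih _ (by omega) hmd (fun l hl => hdiag l (hnm.le.trans hl))
        (fun l r hl => hlt l r (hnm.le.trans hl)) rfl
    calc ∑ m ∈ Ioc n d, glCaux d χ (d - m) * χ n m
        < ∑ m ∈ Ioc n d, glCaux d χ (d - m) * χ (n + 1) m :=
          sum_lt_sum_of_nonempty ⟨d, right_mem_Ioc.2 hnd⟩ fun m hm =>
            mul_lt_mul_of_pos_left (hlt n m le_rfl (mem_Ioc.1 hm).1 (mem_Ioc.1 hm).2) (hpos m hm)
      _ = 1 := by
          rw [← Icc_add_one_left_eq_Ioc]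
          exact sum_glCaux_mul_eq_one hnd (hdiag _ n.le_succ hnd).ne'

end Coefficients

section LyapunovEntropy

variable {lam : List ℕ → ℝ} {I : Finset (List ℕ)} {p : List ℕ → ℝ}

lemma glLyap_lt_glLyap {k ℓ : ℕ} (hp : IsProbVec I p) (hpos : ∀ i ∈ I, 0 < lam (i.take ℓ))
    (hlt : ∀ i ∈ I, lam (i.take ℓ) < lam (i.take k)) : glLyap lam I k p < glLyap lam I ℓ p :=
  neg_lt_neg <| sum_mul_lt_sum_mul hp.1 (hp.2 ▸ one_ne_zero) fun i hi =>
    log_lt_log (hpos i hi) (hlt i hi)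

lemma glLyap_pos {ℓ : ℕ} (hp : IsProbVec I p) (hlam : ∀ i ∈ I, lam (i.take ℓ) ∈ Set.Ioo (0 : ℝ) 1) :
    0 < glLyap lam I ℓ p := by
  have h := sum_mul_lt_sum_mul hp.1 (hp.2 ▸ one_ne_zero) fun i hi =>
    log_neg (hlam i hi).1 (hlam i hi).2
  simpa [glLyap] using h

variable {s : ℕ → ℝ} {n : ℕ}

lemma glPstar_pos {i : List ℕ} (hlam : ∀ ℓ ∈ Icc 1 n, 0 < lam (i.take ℓ)) :
    0 < glPstar lam s n i :=
  prod_pos fun ℓ hℓ => rpow_pos_of_pos (hlam ℓ hℓ) _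

lemma log_glPstar {i : List ℕ} (hlam : ∀ ℓ ∈ Icc 1 n, 0 < lam (i.take ℓ)) :
    log (glPstar lam s n i) = ∑ ℓ ∈ Icc 1 n, (s ℓ - s (ℓ - 1)) * log (lam (i.take ℓ)) := by
  rw [glPstar, log_prod fun ℓ hℓ => (rpow_pos_of_pos (hlam ℓ hℓ) _).ne']
  exact sum_congr rfl fun ℓ hℓ => log_rpow (hlam ℓ hℓ) _

variable (hlam : ∀ i ∈ I, ∀ ℓ ∈ Icc 1 n, 0 < lam (i.take ℓ))
include hlam

lemma neg_sum_mul_log_glPstar :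
    -∑ i ∈ I, p i * log (glPstar lam s n i) =
      ∑ ℓ ∈ Icc 1 n, (s ℓ - s (ℓ - 1)) * glLyap lam I ℓ p := by
  rw [sum_congr rfl fun i hi => congrArg (p i * ·) (log_glPstar (hlam i hi))]
  simp only [glLyap, mul_neg, sum_neg_distrib, mul_sum]
  rw [sum_comm]
  simp only [mul_left_comm]

variable (hs : ∑ i ∈ I, glPstar lam s n i = 1) (hp : IsProbVec I p)
include hs hp

lemma glEnt_le_sum_mul_glLyap :
    glEnt I p ≤ ∑ ℓ ∈ Icc 1 n, (s ℓ - s (ℓ - 1)) * glLyap lam I ℓ p := by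
  rw [← neg_sum_mul_log_glPstar hlam]
  exact neg_le_neg <| sum_mul_log_le_sum_mul_log_self hp.1 (fun i hi => glPstar_pos (hlam i hi))
    (hp.2.trans hs.symm)

lemma glEnt_eq_sum_mul_glLyap_iff :
    glEnt I p = ∑ ℓ ∈ Icc 1 n, (s ℓ - s (ℓ - 1)) * glLyap lam I ℓ p ↔
      ∀ i ∈ I, p i = glPstar lam s n i := by
  rw [← neg_sum_mul_log_glPstar hlam, glEnt, neg_inj]
  exact sum_mul_log_self_eq_sum_mul_log_iff hp.1 (fun i hi => glPstar_pos (hlam i hi))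
    (hp.2.trans hs.symm)

end LyapunovEntropy

section GatzourasLalley

variable {d m n : ℕ} {Nf : List ℕ → ℕ} {lam : List ℕ → ℝ} {P : ℕ → List ℕ → ℝ}

lemma lam_take_mem_Ioo (hlam : ∀ n, 1 ≤ n → n ≤ d → ∀ i ∈ glIdx Nf n, lam i ∈ Set.Ioo (0 : ℝ) 1)
    (hm : 1 ≤ m) (hmn : m ≤ n) (hn : n ≤ d) {i : List ℕ} (hi : i ∈ glIdx Nf n) :
    lam (i.take m) ∈ Set.Ioo (0 : ℝ) 1 :=
  hlam m hm (hmn.trans hn) _ (take_mem_glIdx hmn hi)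

lemma lam_take_succ_lt (hNf : ∀ n < d, ∀ u ∈ glIdx Nf n, 1 ≤ Nf u)
    (horder : ∀ i ∈ glIdx Nf d, ∀ ℓ, 1 ≤ ℓ → ℓ < d → lam (i.take (ℓ + 1)) < lam (i.take ℓ))
    (hm : 1 ≤ m) (hmn : m < n) (hn : n ≤ d) {i : List ℕ} (hi : i ∈ glIdx Nf n) :
    lam (i.take (m + 1)) < lam (i.take m) := by
  obtain ⟨v, hv, rfl⟩ := exists_mem_glIdx_take_eq hn hNf hi
  rw [List.take_take, List.take_take, min_eq_left hmn, min_eq_left hmn.le]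
  exact horder v hv m hm (hmn.trans_le hn)

variable (hlam : ∀ n, 1 ≤ n → n ≤ d → ∀ i ∈ glIdx Nf n, lam i ∈ Set.Ioo (0 : ℝ) 1)
  (hP : ∀ n, 1 ≤ n → n ≤ d → IsProbVec (glIdx Nf n) (P n))
include hlam hP

lemma glLyap_self_pos (hn : 1 ≤ n) (hnd : n ≤ d) : 0 < glLyap lam (glIdx Nf n) n (P n) :=
  glLyap_pos (hP n hn hnd) fun _ hi => lam_take_mem_Ioo hlam hn le_rfl hnd hi

lemma sum_glC_mul_glLyap_eq_one (hn : n ∈ Icc 1 d) :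
    ∑ m ∈ Icc n d, glC d lam Nf P m * glLyap lam (glIdx Nf m) n (P m) = 1 := by
  obtain ⟨hn, hnd⟩ := mem_Icc.1 hn
  exact sum_glCaux_mul_eq_one (χ := fun a m => glLyap lam (glIdx Nf m) a (P m)) hnd
    (glLyap_self_pos hlam hP hn hnd).ne'

lemma glC_pos (hNf : ∀ n < d, ∀ u ∈ glIdx Nf n, 1 ≤ Nf u)
    (horder : ∀ i ∈ glIdx Nf d, ∀ ℓ, 1 ≤ ℓ → ℓ < d → lam (i.take (ℓ + 1)) < lam (i.take ℓ))
    (hn : n ∈ Icc 1 d) : 0 < glC d lam Nf P n := by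
  obtain ⟨hn, hnd⟩ := mem_Icc.1 hn
  refine glCaux_sub_pos hnd (fun m hnm hmd => glLyap_self_pos hlam hP (hn.trans hnm) hmd)
    fun k m hnk hkm hmd => glLyap_lt_glLyap (hP m (by omega) hmd) (fun i hi => ?_) fun i hi => ?_
  · exact (lam_take_mem_Ioo hlam (by omega) hkm hmd hi).1
  · exact lam_take_succ_lt hNf horder (hn.trans hnk) hkm hmd hi

end GatzourasLalley

/-- Under the coordinate ordering condition, for every tuple
`P ∈ P_{1,…,d}` one has `∑_{n=1}^d C_n^{(d)}(P)·H(p_n) ≤ s_d`, with equality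
if and only if `P = P^* = (p_d^*;…;p_1^*)`. -/
theorem variational_inequality_and_uniqueness
    (d : ℕ) (hd : 1 ≤ d)
    (Nf : List ℕ → ℕ) (hN : 2 ≤ Nf [])
    (hNf : ∀ n < d, ∀ u ∈ glIdx Nf n, 1 ≤ Nf u)
    (lam : List ℕ → ℝ)
    (hlam : ∀ n, 1 ≤ n → n ≤ d → ∀ i ∈ glIdx Nf n, lam i ∈ Set.Ioo (0:ℝ) 1)
    (horder : ∀ i ∈ glIdx Nf d, ∀ ℓ, 1 ≤ ℓ → ℓ < d →
      lam (i.take (ℓ + 1)) < lam (i.take ℓ))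
    (s : ℕ → ℝ) (hs0 : s 0 = 0)
    (hs : ∀ n, 1 ≤ n → n ≤ d →
      ∑ i ∈ glIdx Nf n, ∏ ℓ ∈ Finset.Icc 1 n, lam (i.take ℓ) ^ (s ℓ - s (ℓ - 1)) = 1)
    (P : ℕ → List ℕ → ℝ)
    (hP : ∀ n, 1 ≤ n → n ≤ d → IsProbVec (glIdx Nf n) (P n)) :
    glObj d lam Nf P ≤ s d ∧
    (glObj d lam Nf P = s d ↔
      ∀ n, 1 ≤ n → n ≤ d → ∀ i ∈ glIdx Nf n, P n i = glPstar lam s n i) := by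
  have hlam_pos : ∀ n ∈ Icc 1 d, ∀ i ∈ glIdx Nf n, ∀ ℓ ∈ Icc 1 n, 0 < lam (i.take ℓ) :=
    fun n hn i hi ℓ hℓ =>
      (lam_take_mem_Ioo hlam (mem_Icc.1 hℓ).1 (mem_Icc.1 hℓ).2 (mem_Icc.1 hn).2 hi).1
  have hsum : ∀ n ∈ Icc 1 d, ∑ i ∈ glIdx Nf n, glPstar lam s n i = 1 := fun n hn =>
    hs n (mem_Icc.1 hn).1 (mem_Icc.1 hn).2
  have hprob : ∀ n ∈ Icc 1 d, IsProbVec (glIdx Nf n) (P n) := fun n hn =>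
    hP n (mem_Icc.1 hn).1 (mem_Icc.1 hn).2
  have hC : ∀ n ∈ Icc 1 d, 0 < glC d lam Nf P n := fun n hn => glC_pos hlam hP hNf horder hn
  have hle : ∀ n ∈ Icc 1 d, glC d lam Nf P n * glEnt (glIdx Nf n) (P n) ≤ glC d lam Nf P n *
      ∑ ℓ ∈ Icc 1 n, (s ℓ - s (ℓ - 1)) * glLyap lam (glIdx Nf n) ℓ (P n) := fun n hn =>
    mul_le_mul_of_nonneg_left
      (glEnt_le_sum_mul_glLyap (hlam_pos n hn) (hsum n hn) (hprob n hn)) (hC n hn).le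
  have hsd := sum_mul_sum_sub_pred_mul (s := s) fun n hn => sum_glC_mul_glLyap_eq_one hlam hP hn
  rw [hs0, sub_zero] at hsd
  rw [← hsd]
  refine ⟨sum_le_sum hle, (sum_eq_sum_iff_of_le hle).trans ?_⟩
  simp only [← and_imp, ← mem_Icc]
  exact forall₂_congr fun n hn => (mul_right_inj' (hC n hn).ne').trans
    (glEnt_eq_sum_mul_glLyap_iff (hlam_pos n hn) (hsum n hn) (hprob n hn))
end
end

section
/- Let S_1,…,S_N (N ≥ 2) be contracting similarities of ℝ^D with ratios λ_1,…,λ_N ∈ (0,1) satisfying the open set condition, let Λ be the attractor and let s be the similarity dimension. Then the box dimension of Λ exists and equals s. -/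
open Real Finset Filter

noncomputable section

/-!
Stop every word `i₁ i₂ …` as soon as the ratio of the corresponding composition of the maps drops
below `δ`. The stopped words `w` have ratios comparable to `δ`, and the `s`-th powers of these
ratios still sum to `1`, so there are about `δ ^ (-s)` of them. The pieces `S_w Λ` cover `Λ`, which
bounds the covering number from above. For the lower bound, fix a compact ball `K` inside the open
set: the sets `S_w K` are disjoint, have volume comparable to `δ ^ n` and lie in a neighbourhood of
`Λ` of radius comparable to `δ`, whereas a cover of `Λ` by `m` sets of diameter `δ` shows that this
neighbourhood has volume at most a multiple of `m δ ^ n`.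
-/

section BoxDimension

open Metric MeasureTheory Measure Module Asymptotics
open scoped ENNReal Topology

theorem tendsto_log_div_neg_log_of_isTheta_rpow {f : ℝ → ℝ} {s : ℝ}
    (h : f =Θ[𝓝[>] 0] fun δ ↦ δ ^ (-s)) :
    Tendsto (fun δ ↦ log (f δ) / -log δ) (𝓝[>] 0) (𝓝 s) := by
  obtain ⟨C, hC, hupper⟩ := h.1.exists_pos
  obtain ⟨c, hc, hlower⟩ := h.2.exists_pos
  have hlog : Tendsto (fun δ ↦ -log δ) (𝓝[>] 0) atTop :=
    tendsto_neg_atBot_atTop.comp tendsto_log_nhdsGT_zero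
  have hlim (b : ℝ) : Tendsto (fun δ ↦ s + b / -log δ) (𝓝[>] 0) (𝓝 s) := by
    simpa only [add_zero] using (hlog.const_div_atTop b).const_add s
  refine tendsto_of_tendsto_of_tendsto_of_le_of_le' (hlim (-log c)) (hlim (log C)) ?_ ?_
  all_goals
    filter_upwards [hupper.bound, hlower.bound, self_mem_nhdsWithin,
      hlog.eventually_gt_atTop 0] with δ hle hge (hδ : 0 < δ) hneg
    have hpow : 0 < δ ^ (-s) := rpow_pos_of_pos hδ _
    rw [norm_of_nonneg hpow.le, norm_eq_abs] at hle hge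
    have hf : 0 < |f δ| := pos_of_mul_pos_right (hpow.trans_le hge) hc.le
    rw [← log_abs (f δ)]
  · have := log_le_log hpow hge
    rw [log_rpow hδ, log_mul hc.ne' hf.ne'] at this
    rw [le_div_iff₀ hneg, add_mul, div_mul_cancel₀ _ hneg.ne']
    linarith
  · have := log_le_log hf hle
    rw [log_mul hC.ne' hpow.ne', log_rpow hδ] at this
    rw [div_le_iff₀ hneg, add_mul, div_mul_cancel₀ _ hneg.ne']
    linarith

section Cover

theorem exists_fin_cover_of_finset_cover {X κ : Type*} [EMetricSpace X] {A : Set X} {r : ℝ≥0∞}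
    {W : Finset κ} {U : κ → Set X} (hU : ∀ k ∈ W, ediam (U k) ≤ r) (hA : A ⊆ ⋃ k ∈ W, U k) :
    ∃ U' : Fin #W → Set X, (∀ k, ediam (U' k) ≤ r) ∧ A ⊆ ⋃ k, U' k := by
  refine ⟨fun k ↦ U (W.equivFin.symm k), fun k ↦ hU _ (W.equivFin.symm k).2, ?_⟩
  rw [Function.Surjective.iUnion_comp W.equivFin.symm.surjective fun w : W ↦ U w]
  exact hA.trans (Set.iUnion_subtype (· ∈ W) fun w ↦ U w).ge

theorem coverNum_le_card {X κ : Type*} [EMetricSpace X] {A : Set X} {δ : ℝ} {W : Finset κ}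
    {U : κ → Set X} (hU : ∀ k ∈ W, ediam (U k) ≤ ENNReal.ofReal δ) (hA : A ⊆ ⋃ k ∈ W, U k) :
    coverNum A δ ≤ #W :=
  Nat.sInf_le (exists_fin_cover_of_finset_cover hU hA)

theorem exists_cover_coverNum {X : Type*} [MetricSpace X] {A : Set X} (hA : TotallyBounded A)
    {δ : ℝ} (hδ : 0 < δ) :
    ∃ U : Fin (coverNum A δ) → Set X,
      (∀ k, ediam (U k) ≤ ENNReal.ofReal δ) ∧ A ⊆ ⋃ k, U k := by
  obtain ⟨T, hT, hcover⟩ := totallyBounded_iff.1 hA (δ / 2) (half_pos hδ)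
  lift T to Finset X using hT
  suffices hdiam : ∀ x, ediam (ball x (δ / 2)) ≤ ENNReal.ofReal δ from
    Nat.sInf_mem (s := {m | ∃ U : Fin m → Set X, (∀ k, ediam (U k) ≤ ENNReal.ofReal δ) ∧
      A ⊆ ⋃ k, U k}) ⟨#T, exists_fin_cover_of_finset_cover (fun x _ ↦ hdiam x) hcover⟩
  intro x
  calc ediam (ball x (δ / 2)) ≤ 2 * ENNReal.ofReal (δ / 2) := by
        rw [← eball_ofReal]; exact ediam_eball_le
    _ = ENNReal.ofReal δ := by
        rw [← ENNReal.ofReal_ofNat 2, ← ENNReal.ofReal_mul zero_le_two,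
          mul_div_cancel₀ _ two_ne_zero]

theorem addHaar_thickening_le_coverNum {E : Type*} [NormedAddCommGroup E] [NormedSpace ℝ E]
    [FiniteDimensional ℝ E] [MeasurableSpace E] [BorelSpace E] (μ : Measure E)
    [μ.IsAddHaarMeasure] {A : Set E} (hA : TotallyBounded A) {r δ : ℝ} (hr : 0 ≤ r)
    (hδ : 0 < δ) :
    μ (thickening r A) ≤
      coverNum A δ * (ENNReal.ofReal ((r + δ) ^ finrank ℝ E) * μ (ball 0 1)) := by
  obtain ⟨U, hU, hcover⟩ := exists_cover_coverNum hA hδ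
  have hball (k) : ∃ q, U k ⊆ closedBall q δ := by
    rcases (U k).eq_empty_or_nonempty with hempty | ⟨q, hq⟩
    · exact ⟨0, hempty ▸ Set.empty_subset _⟩
    · refine ⟨q, fun x hx ↦ ?_⟩
      rw [mem_closedBall, ← ENNReal.ofReal_le_ofReal_iff hδ.le, ← edist_dist]
      exact (edist_le_ediam_of_mem hx hq).trans (hU k)
  choose q hq using hball
  have hsub : thickening r A ⊆ ⋃ k, ball (q k) (r + δ) := fun x hx ↦ by
    obtain ⟨z, hz, hxz⟩ := mem_thickening_iff.1 hx
    obtain ⟨k, hzk⟩ := Set.mem_iUnion.1 (hcover hz)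
    exact Set.mem_iUnion.2
      ⟨k, (dist_triangle x z (q k)).trans_lt (add_lt_add_of_lt_of_le hxz (hq k hzk))⟩
  calc μ (thickening r A) ≤ ∑ k, μ (ball (q k) (r + δ)) :=
        (measure_mono hsub).trans (measure_iUnion_fintype_le μ _)
    _ = coverNum A δ * (ENNReal.ofReal ((r + δ) ^ finrank ℝ E) * μ (ball 0 1)) := by
        simp only [addHaar_ball_of_pos μ _ (add_pos_of_nonneg_of_pos hr hδ), sum_const, card_univ,
          Fintype.card_fin, nsmul_eq_mul]

end Cover

theorem ofReal_rpow_mul_hausdorffMeasure_le_image {X Y : Type*} [MetricSpace X]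
    [MeasurableSpace X] [BorelSpace X] [MetricSpace Y] [MeasurableSpace Y] [BorelSpace Y]
    {f : X → Y} {c d : ℝ} (hc : 0 < c) (hd : 0 ≤ d)
    (hf : ∀ x y, c * dist x y ≤ dist (f x) (f y)) (A : Set X) :
    ENNReal.ofReal c ^ d * μH[d] A ≤ μH[d] (f '' A) := by
  have hanti : AntilipschitzWith (c⁻¹).toNNReal f := .of_le_mul_dist fun x y ↦ by
    rw [coe_toNNReal _ (inv_nonneg.2 hc.le), ← div_eq_inv_mul, le_div_iff₀' hc]
    exact hf x y
  have hmeas := hanti.le_hausdorffMeasure_image hd A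
  rw [← ENNReal.ofReal, ENNReal.ofReal_inv_of_pos hc, ENNReal.inv_rpow] at hmeas
  rwa [mul_comm, ← ENNReal.le_div_iff_mul_le, div_eq_mul_inv, mul_comm]
  · exact .inl (ENNReal.rpow_pos (ENNReal.ofReal_pos.2 hc) ENNReal.ofReal_ne_top).ne'
  · exact .inl (ENNReal.rpow_ne_top_of_nonneg hd ENNReal.ofReal_ne_top)

section WordMap

variable {ι X : Type*}

/-- The composition `S_w = S_{i₁} ∘ ⋯ ∘ S_{iₖ}` along the word `w = i₁ ⋯ iₖ`. Its ratio
`λ_w = λ_{i₁} ⋯ λ_{iₖ}` is written `(w.map lam).prod`. -/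
def wordMap (S : ι → X → X) : List ι → X → X
  | [] => id
  | i :: w => S i ∘ wordMap S w

theorem wordMap_image_subset {S : ι → X → X} {V : Set X} (hV : ∀ i, S i '' V ⊆ V) :
    ∀ w : List ι, wordMap S w '' V ⊆ V
  | [] => (Set.image_id V).subset
  | i :: w => by
    rw [wordMap, Set.image_comp]
    exact (Set.image_mono (wordMap_image_subset hV w)).trans (hV i)

theorem dist_wordMap [PseudoMetricSpace X] {S : ι → X → X} {lam : ι → ℝ}
    (hS : ∀ i x y, dist (S i x) (S i y) = lam i * dist x y) (w : List ι) (x y : X) :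
    dist (wordMap S w x) (wordMap S w y) = (w.map lam).prod * dist x y := by
  induction w with
  | nil => simp only [wordMap, id_eq, List.map_nil, List.prod_nil, one_mul]
  | cons i w ih => rw [wordMap, Function.comp_apply, Function.comp_apply, hS, ih, List.map_cons,
      List.prod_cons, mul_assoc]

theorem wordMap_image_subset_thickening [PseudoMetricSpace X] {S : ι → X → X} {lam : ι → ℝ}
    (hS : ∀ i x y, dist (S i x) (S i y) = lam i * dist x y) {A K : Set X}
    (hA : ∀ i, S i '' A ⊆ A) {p : X} (hp : p ∈ A) {R δ : ℝ} (hK : K ⊆ ball p R) (hδ : 0 < δ)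
    {w : List ι} (hw : (w.map lam).prod ≤ δ) : wordMap S w '' K ⊆ thickening (δ * R) A := by
  rintro _ ⟨x, hx, rfl⟩
  refine mem_thickening_iff.2
    ⟨wordMap S w p, wordMap_image_subset hA w (Set.mem_image_of_mem _ hp), ?_⟩
  rw [dist_wordMap hS]
  exact mul_lt_mul' hw (hK hx) dist_nonneg hδ

end WordMap

section CutSet

variable {ι : Type*} [Fintype ι]

/-- The set of words whose first letter is an arbitrary `i` and whose remaining letters form a word
of `W i`; the recursive step in the construction of cut sets. -/
def consUnion (W : ι → Finset (List ι)) : Finset (List ι) :=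
  (univ.sigma W).map ⟨fun p ↦ p.1 :: p.2, by rintro ⟨i, v⟩ ⟨j, w⟩ h; simpa using h⟩

theorem mem_consUnion {W : ι → Finset (List ι)} {w : List ι} :
    w ∈ consUnion W ↔ ∃ i, ∃ v ∈ W i, i :: v = w := by
  simp only [consUnion, Finset.mem_map, mem_sigma, mem_univ, true_and, Sigma.exists]
  rfl

theorem sum_consUnion {M : Type*} [AddCommMonoid M] (W : ι → Finset (List ι)) (f : List ι → M) :
    ∑ w ∈ consUnion W, f w = ∑ i, ∑ v ∈ W i, f (i :: v) := by
  rw [consUnion, sum_map, sum_sigma]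
  rfl

theorem biUnion_consUnion {X : Type*} (W : ι → Finset (List ι)) (f : List ι → Set X) :
    ⋃ w ∈ consUnion W, f w = ⋃ i, ⋃ v ∈ W i, f (i :: v) := by
  ext x
  simp only [Set.mem_iUnion, mem_consUnion, exists_prop]
  grind

/-- A cut set (or section) of the tree of words: a finite set of words in which every infinite word
has exactly one prefix. It is encoded by generating these sets from the first letter on, to match
the recursion of `wordMap`. -/
inductive IsCutSet : Finset (List ι) → Prop
  | nil : IsCutSet {[]}
  | cons {W : ι → Finset (List ι)} (hW : ∀ i, IsCutSet (W i)) :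
      IsCutSet (consUnion W)

namespace IsCutSet

variable {W : Finset (List ι)} {lam : ι → ℝ} {s : ℝ}

theorem sum_prod_rpow (hW : IsCutSet W) (hlam : ∀ i, 0 ≤ lam i) (hs : ∑ i, lam i ^ s = 1) :
    ∑ w ∈ W, (w.map lam).prod ^ s = 1 := by
  induction hW with
  | nil => simp only [sum_singleton, List.map_nil, List.prod_nil, one_rpow]
  | cons _ ih =>
    have hcons (i : ι) (w : List ι) :
        ((i :: w).map lam).prod ^ s = lam i ^ s * (w.map lam).prod ^ s := by
      rw [List.map_cons, List.prod_cons,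
        mul_rpow (hlam i) (List.prod_nonneg (List.forall_mem_map.2 fun j _ ↦ hlam j))]
    simp only [sum_consUnion, hcons, ← mul_sum, ih,
      mul_one, hs]

theorem card_mul_rpow_le_one (hW : IsCutSet W) (hlam : ∀ i, 0 ≤ lam i)
    (hs : ∑ i, lam i ^ s = 1) (hs0 : 0 ≤ s) {c : ℝ} (hc : 0 ≤ c)
    (hcW : ∀ w ∈ W, c ≤ (w.map lam).prod) : #W * c ^ s ≤ 1 := by
  rw [← nsmul_eq_mul, ← hW.sum_prod_rpow hlam hs]
  exact card_nsmul_le_sum _ _ _ fun w hw ↦ rpow_le_rpow hc (hcW w hw) hs0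

theorem one_le_card_mul_rpow (hW : IsCutSet W) (hlam : ∀ i, 0 ≤ lam i)
    (hs : ∑ i, lam i ^ s = 1) (hs0 : 0 ≤ s) {c : ℝ}
    (hcW : ∀ w ∈ W, (w.map lam).prod ≤ c) : 1 ≤ #W * c ^ s := by
  rw [← nsmul_eq_mul, ← hW.sum_prod_rpow hlam hs]
  refine sum_le_card_nsmul _ _ _ fun w hw ↦ rpow_le_rpow ?_ (hcW w hw) hs0
  exact List.prod_nonneg (List.forall_mem_map.2 fun j _ ↦ hlam j)

variable {X : Type*} {S : ι → X → X}

theorem subset_iUnion_image_wordMap (hW : IsCutSet W) {A : Set X} (hA : A ⊆ ⋃ i, S i '' A) :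
    A ⊆ ⋃ w ∈ W, wordMap S w '' A := by
  induction hW with
  | nil => simp only [mem_singleton, Set.iUnion_iUnion_eq_left, wordMap, Set.image_id, subset_rfl]
  | cons _ ih =>
    simp only [biUnion_consUnion, wordMap, Set.image_comp, ← Set.image_iUnion₂]
    exact hA.trans (Set.iUnion_mono fun i ↦ Set.image_mono (ih i))

theorem pairwiseDisjoint_image_wordMap (hW : IsCutSet W) (hS : ∀ i, (S i).Injective) {V : Set X}
    (hV : ∀ i, S i '' V ⊆ V) (hdisj : ∀ i j, i ≠ j → Disjoint (S i '' V) (S j '' V)) :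
    (W : Set (List ι)).PairwiseDisjoint fun w ↦ wordMap S w '' V := by
  induction hW with
  | nil => simp only [coe_singleton, Set.pairwiseDisjoint_singleton]
  | cons _ ih =>
    intro _ hv _ hw hne
    obtain ⟨i, v, hv', rfl⟩ := mem_consUnion.1 (mem_coe.1 hv)
    obtain ⟨j, w, hw', rfl⟩ := mem_consUnion.1 (mem_coe.1 hw)
    simp only [Function.onFun, wordMap, Set.image_comp]
    obtain rfl | hij := eq_or_ne i j
    · exact (Set.disjoint_image_iff (hS i)).2 (ih i hv' hw' fun h ↦ hne (congrArg _ h))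
    · exact (hdisj i j hij).mono (Set.image_mono (wordMap_image_subset hV v))
        (Set.image_mono (wordMap_image_subset hV w))

theorem card_mul_hausdorffMeasure_le [MetricSpace X] [MeasurableSpace X] [BorelSpace X]
    (hW : IsCutSet W) (hlam : ∀ i, 0 < lam i)
    (hS : ∀ i x y, dist (S i x) (S i y) = lam i * dist x y) {V K : Set X}
    (hV : ∀ i, S i '' V ⊆ V) (hdisj : ∀ i j, i ≠ j → Disjoint (S i '' V) (S j '' V))
    (hK : IsCompact K) (hKV : K ⊆ V) {c d : ℝ} (hc : 0 < c) (hd : 0 ≤ d)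
    (hcW : ∀ w ∈ W, c ≤ (w.map lam).prod) :
    #W * (ENNReal.ofReal c ^ d * μH[d] K) ≤ μH[d] (⋃ w ∈ W, wordMap S w '' K) := by
  have hinj (i) : (S i).Injective := fun x y hxy ↦ by
    simpa [hxy, (hlam i).ne'] using (hS i x y).symm
  have hcompact (w) : IsCompact (wordMap S w '' K) :=
    hK.image (LipschitzWith.of_dist_le' fun x y ↦ (dist_wordMap hS w x y).le).continuous
  rw [measure_biUnion_finset
    ((hW.pairwiseDisjoint_image_wordMap hinj hV hdisj).mono fun w ↦ Set.image_mono hKV)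
    fun w _ ↦ (hcompact w).measurableSet, ← nsmul_eq_mul]
  refine card_nsmul_le_sum _ _ _ fun w hw ↦
    ofReal_rpow_mul_hausdorffMeasure_le_image hc hd (fun x y ↦ ?_) K
  rw [dist_wordMap hS]
  exact mul_le_mul_of_nonneg_right (hcW w hw) dist_nonneg

end IsCutSet

theorem exists_isCutSet_prod_mem_Icc [Nonempty ι] {lam : ι → ℝ}
    (hlam : ∀ i, lam i ∈ Set.Ioo (0 : ℝ) 1) :
    ∃ a > 0, ∀ δ ∈ Set.Ioc (0 : ℝ) 1, ∃ W : Finset (List ι), IsCutSet W ∧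
      ∀ w ∈ W, (w.map lam).prod ∈ Set.Icc (a * δ) δ := by
  obtain ⟨imin, hmin⟩ := Finite.exists_min lam
  obtain ⟨imax, hmax⟩ := Finite.exists_max lam
  -- Passing from `δ` to `δ / lam i` can overshoot `1`, but never `(lam imin)⁻¹`.
  have hscale (n : ℕ) : ∀ δ, lam imax ^ n ≤ δ → lam imin * δ ≤ 1 → ∃ W : Finset (List ι),
      IsCutSet W ∧ ∀ w ∈ W, (w.map lam).prod ∈ Set.Icc (lam imin * δ) δ := by
    induction n with
    | zero => exact fun δ h1 h2 ↦ ⟨{[]}, .nil, by simpa using ⟨h2, h1⟩⟩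
    | succ n ih =>
      intro δ hlow hhigh
      rcases le_or_gt 1 δ with h1 | h1
      · exact ⟨{[]}, .nil, by simpa using ⟨hhigh, h1⟩⟩
      have hstep (i) : ∃ W : Finset (List ι), IsCutSet W ∧
          ∀ w ∈ W, (w.map lam).prod ∈ Set.Icc (lam imin * (δ / lam i)) (δ / lam i) := by
        have hi := (hlam i).1
        refine ih _ ?_ ?_
        · rw [le_div_iff₀ hi]
          exact (mul_le_mul_of_nonneg_left (hmax i) (pow_nonneg (hlam imax).1.le n)).trans hlow
        · rw [← mul_div_assoc, div_le_one hi]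
          exact (mul_le_of_le_one_right (hlam imin).1.le h1.le).trans (hmin i)
      choose W hW hWmem using hstep
      refine ⟨_, .cons hW, fun w hw ↦ ?_⟩
      obtain ⟨i, v, hv, rfl⟩ := mem_consUnion.1 hw
      have hi := (hlam i).1
      have hvmem := hWmem i v hv
      rw [List.map_cons, List.prod_cons]
      rw [← mul_div_assoc, Set.mem_Icc, div_le_iff₀' hi, le_div_iff₀' hi] at hvmem
      exact hvmem
  refine ⟨lam imin, (hlam imin).1, fun δ hδ ↦ ?_⟩
  obtain ⟨n, hn⟩ := exists_pow_lt_of_lt_one hδ.1 (hlam imax).2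
  exact hscale n δ hn.le (mul_le_one₀ (hlam imin).2.le hδ.1.le hδ.2)

end CutSet

section SelfSimilar

variable {ι : Type*} [Fintype ι] {lam : ι → ℝ} {s : ℝ}

theorem coverNum_isBigO_rpow {X : Type*} [MetricSpace X] {S : ι → X → X}
    (hlam : ∀ i, lam i ∈ Set.Ioo (0 : ℝ) 1)
    (hS : ∀ i x y, dist (S i x) (S i y) = lam i * dist x y) {Λ : Set X}
    (hΛb : Bornology.IsBounded Λ) (hΛ : Λ ⊆ ⋃ i, S i '' Λ) (hs0 : 0 ≤ s)
    (hs : ∑ i, lam i ^ s = 1) :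
    (fun δ ↦ (coverNum Λ δ : ℝ)) =O[𝓝[>] 0] fun δ ↦ δ ^ (-s) := by
  have : Nonempty ι := univ_nonempty_iff.1 (nonempty_of_sum_ne_zero (hs ▸ one_ne_zero))
  obtain ⟨a, ha, hcut⟩ := exists_isCutSet_prod_mem_Icc hlam
  set L := diam Λ + 1
  have hL : 1 ≤ L := le_add_of_nonneg_left diam_nonneg
  have hL0 : 0 < L := one_pos.trans_le hL
  refine IsBigO.of_bound ((a / L) ^ (-s)) ?_
  filter_upwards [Ioc_mem_nhdsGT one_pos] with δ ⟨hδ, hδ1⟩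
  obtain ⟨W, hW, hWmem⟩ := hcut (δ / L) ⟨div_pos hδ hL0, div_le_one_of_le₀ (hδ1.trans hL) hL0.le⟩
  have hdiam : ∀ w ∈ W, ediam (wordMap S w '' Λ) ≤ ENNReal.ofReal δ := fun w hw ↦ by
    rw [ediam_image_le_iff]
    intro x hx y hy
    rw [edist_dist, dist_wordMap hS]
    refine ENNReal.ofReal_le_ofReal ?_
    calc (w.map lam).prod * dist x y ≤ δ / L * L :=
          mul_le_mul (hWmem w hw).2 ((dist_le_diam_of_mem hΛb hx hy).trans (lt_add_one _).le)
            dist_nonneg (div_pos hδ hL0).le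
      _ = δ := div_mul_cancel₀ δ hL0.ne'
  have hcard : (#W : ℝ) * (a / L * δ) ^ s ≤ 1 :=
    hW.card_mul_rpow_le_one (fun i ↦ (hlam i).1.le) hs hs0 (by positivity) fun w hw ↦
      (mul_comm_div a L δ).trans_le (hWmem w hw).1
  rw [norm_natCast, norm_of_nonneg (by positivity)]
  calc (coverNum Λ δ : ℝ) ≤ #W :=
        mod_cast coverNum_le_card hdiam (hW.subset_iUnion_image_wordMap hΛ)
    _ ≤ (a / L * δ) ^ (-s) := by
        rwa [rpow_neg (by positivity), ← one_div, le_div_iff₀ (by positivity)]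
    _ = (a / L) ^ (-s) * δ ^ (-s) := mul_rpow (by positivity) hδ.le

variable {E : Type*} [NormedAddCommGroup E] [NormedSpace ℝ E] [FiniteDimensional ℝ E]
  {S : ι → E → E} {V Λ : Set E}

theorem IsCutSet.card_mul_pow_le_coverNum_mul_pow {W : Finset (List ι)} (hW : IsCutSet W)
    (hlam : ∀ i, 0 < lam i) (hS : ∀ i x y, dist (S i x) (S i y) = lam i * dist x y)
    (hV : ∀ i, S i '' V ⊆ V) (hdisj : ∀ i j, i ≠ j → Disjoint (S i '' V) (S j '' V))
    (hΛ : ∀ i, S i '' Λ ⊆ Λ) (hΛb : Bornology.IsBounded Λ) {x p : E} {ρ R : ℝ} (hρ : 0 < ρ)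
    (hxV : closedBall x ρ ⊆ V) (hp : p ∈ Λ) (hxR : closedBall x ρ ⊆ ball p R)
    {c δ : ℝ} (hc : 0 < c) (hδ : 0 < δ) (hcW : ∀ w ∈ W, (w.map lam).prod ∈ Set.Icc c δ) :
    #W * (c * ρ) ^ finrank ℝ E ≤ coverNum Λ δ * (δ * R + δ) ^ finrank ℝ E := by
  have hR : 0 < R := pos_of_mem_ball (hxR (mem_closedBall_self hρ.le))
  borelize E
  have hvol : #W * (ENNReal.ofReal c ^ (finrank ℝ E : ℝ) * μH[finrank ℝ E] (closedBall x ρ)) ≤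
      coverNum Λ δ *
        (ENNReal.ofReal ((δ * R + δ) ^ finrank ℝ E) * μH[finrank ℝ E] (ball (0 : E) 1)) :=
    calc
      _ ≤ μH[finrank ℝ E] (⋃ w ∈ W, wordMap S w '' closedBall x ρ) :=
        hW.card_mul_hausdorffMeasure_le hlam hS hV hdisj (isCompact_closedBall x ρ) hxV hc
          (Nat.cast_nonneg _) fun w hw ↦ (hcW w hw).1
      _ ≤ μH[finrank ℝ E] (thickening (δ * R) Λ) := measure_mono <|
        Set.iUnion₂_subset fun w hw ↦ wordMap_image_subset_thickening hS hΛ hp hxR hδ (hcW w hw).2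
      _ ≤ _ := addHaar_thickening_le_coverNum _
        (hΛb.isCompact_closure.totallyBounded.subset subset_closure) (by positivity) hδ
  have hball0 : μH[finrank ℝ E] (ball (0 : E) 1) ≠ 0 := (measure_ball_pos _ _ one_pos).ne'
  have hball : μH[finrank ℝ E] (ball (0 : E) 1) ≠ ∞ := measure_ball_lt_top.ne
  rw [← ENNReal.ofReal_le_ofReal_iff (by positivity), ← ENNReal.mul_le_mul_iff_left hball0 hball]
  rw [addHaar_closedBall _ x hρ.le, ENNReal.rpow_natCast, ← ENNReal.ofReal_pow hc.le] at hvol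
  simpa only [ENNReal.ofReal_mul (Nat.cast_nonneg _), ENNReal.ofReal_natCast, mul_pow,
    ENNReal.ofReal_mul (pow_nonneg hc.le _), mul_assoc] using hvol

theorem rpow_isBigO_coverNum (hlam : ∀ i, lam i ∈ Set.Ioo (0 : ℝ) 1)
    (hS : ∀ i x y, dist (S i x) (S i y) = lam i * dist x y)
    (hVne : (interior V).Nonempty) (hV : ∀ i, S i '' V ⊆ V)
    (hdisj : ∀ i j, i ≠ j → Disjoint (S i '' V) (S j '' V))
    (hΛne : Λ.Nonempty) (hΛb : Bornology.IsBounded Λ) (hΛ : ∀ i, S i '' Λ ⊆ Λ) (hs0 : 0 ≤ s)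
    (hs : ∑ i, lam i ^ s = 1) :
    (fun δ ↦ δ ^ (-s)) =O[𝓝[>] 0] fun δ ↦ (coverNum Λ δ : ℝ) := by
  have : Nonempty ι := univ_nonempty_iff.1 (nonempty_of_sum_ne_zero (hs ▸ one_ne_zero))
  obtain ⟨a, ha, hcut⟩ := exists_isCutSet_prod_mem_Icc hlam
  obtain ⟨x, hx⟩ := hVne
  obtain ⟨p, hp⟩ := hΛne
  obtain ⟨ρ, hρ, hxV⟩ := nhds_basis_closedBall.mem_iff.1 (mem_interior_iff_mem_nhds.1 hx)
  obtain ⟨R, hxR⟩ := (isBounded_closedBall (x := x) (r := ρ)).subset_ball p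
  refine IsBigO.of_bound (((R + 1) / (a * ρ)) ^ finrank ℝ E) ?_
  filter_upwards [Ioc_mem_nhdsGT one_pos] with δ hδ
  obtain ⟨W, hW, hWmem⟩ := hcut δ hδ
  have hδ0 : 0 < δ := hδ.1
  have hcount : (#W : ℝ) * (a * ρ) ^ finrank ℝ E ≤ coverNum Λ δ * (R + 1) ^ finrank ℝ E := by
    have := hW.card_mul_pow_le_coverNum_mul_pow (fun i ↦ (hlam i).1) hS hV hdisj hΛ hΛb hρ hxV hp
      hxR (mul_pos ha hδ0) hδ0 hWmem
    rw [mul_right_comm, mul_pow, ← mul_add_one, mul_comm δ, mul_pow _ δ, ← mul_assoc,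
      ← mul_assoc] at this
    exact le_of_mul_le_mul_right this (pow_pos hδ0 _)
  rw [norm_of_nonneg (rpow_nonneg hδ0.le _), norm_natCast]
  calc δ ^ (-s) ≤ #W := by
        rw [rpow_neg hδ0.le, ← one_div, div_le_iff₀ (rpow_pos_of_pos hδ0 s)]
        exact hW.one_le_card_mul_rpow (fun i ↦ (hlam i).1.le) hs hs0 fun w hw ↦ (hWmem w hw).2
    _ ≤ ((R + 1) / (a * ρ)) ^ finrank ℝ E * coverNum Λ δ := by
        rw [div_pow, div_mul_eq_mul_div, le_div_iff₀ (by positivity), mul_comm (_ ^ _)]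
        exact hcount

theorem box_dimension_of_self_similar_set_general (hlam : ∀ i, lam i ∈ Set.Ioo (0 : ℝ) 1)
    (hS : ∀ i x y, dist (S i x) (S i y) = lam i * dist x y)
    (hOSC : ∃ V : Set E, V.Nonempty ∧ IsOpen V ∧
      (∀ i, S i '' V ⊆ V) ∧ ∀ i j, i ≠ j → (S i '' V) ∩ (S j '' V) = ∅)
    (hΛne : Λ.Nonempty) (hΛb : Bornology.IsBounded Λ) (hΛ : Λ = ⋃ i, S i '' Λ)
    (hs0 : 0 ≤ s) (hs : ∑ i, lam i ^ s = 1) :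
    Tendsto (fun δ ↦ log (coverNum Λ δ) / -log δ) (𝓝[>] 0) (𝓝 s) := by
  obtain ⟨V, hVne, hVo, hV, hdisj⟩ := hOSC
  have hsub (i) : S i '' Λ ⊆ Λ := (Set.subset_iUnion (fun i ↦ S i '' Λ) i).trans hΛ.ge
  exact tendsto_log_div_neg_log_of_isTheta_rpow
    ⟨coverNum_isBigO_rpow hlam hS hΛb hΛ.le hs0 hs,
      rpow_isBigO_coverNum hlam hS (hVo.interior_eq.symm ▸ hVne) hV
        (fun i j hij ↦ Set.disjoint_iff_inter_eq_empty.2 (hdisj i j hij))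
        hΛne hΛb hsub hs0 hs⟩

end SelfSimilar

end BoxDimension

/-- The box dimension of a self-similar set satisfying the open set
condition exists and equals the similarity dimension. -/
theorem box_dimension_of_self_similar_set
    (D N : ℕ) (hN : 2 ≤ N)
    (S : Fin N → EuclideanSpace ℝ (Fin D) → EuclideanSpace ℝ (Fin D))
    (lam : Fin N → ℝ) (hlam : ∀ i, lam i ∈ Set.Ioo (0:ℝ) 1)
    (hS : ∀ i x y, dist (S i x) (S i y) = lam i * dist x y)
    (hOSC : ∃ V : Set (EuclideanSpace ℝ (Fin D)), V.Nonempty ∧ IsOpen V ∧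
      (∀ i, S i '' V ⊆ V) ∧ ∀ i j, i ≠ j → (S i '' V) ∩ (S j '' V) = ∅)
    (Λ : Set (EuclideanSpace ℝ (Fin D)))
    (hΛne : Λ.Nonempty) (hΛc : IsCompact Λ)
    (hΛ : Λ = ⋃ i, S i '' Λ)
    (s : ℝ) (hs0 : 0 ≤ s) (hs : ∑ i, lam i ^ s = 1) :
    Filter.Tendsto (fun δ : ℝ => Real.log (coverNum Λ δ) / (-Real.log δ))
      (nhdsWithin 0 (Set.Ioi 0)) (nhds s) := by
  exact box_dimension_of_self_similar_set_general hlam hS hOSC hΛne hΛc.isBounded hΛ hs0 hs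
end
end

section
/- There exists a constant c ≥ 1, depending only on N and λ_1,…,λ_N, such that for every δ ∈ (0,1) and every type p ∈ T_δ, c^{−1}·(1 + (−log δ)/χ(p))^{−N}·δ^{−H(p)/χ(p)} ≤ #T_δ(p) ≤ c·δ^{−H(p)/χ(p)}. -/
open Real Finset Filter

noncomputable section

/-- Entropy `H(p) = -∑_i p_i log p_i`. -/
def entF {N : ℕ} (p : Fin N → ℝ) : ℝ := -∑ i, p i * Real.log (p i)

/-- Lyapunov exponent `χ(p) = -∑_i p_i log λ_i`. -/
def chiF {N : ℕ} (lam p : Fin N → ℝ) : ℝ := -∑ i, p i * Real.log (lam i)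

/-- `k` is the `δ`-stopping of the sequence `i`: the unique positive integer with
`∏_{ℓ=1}^k λ_{i_ℓ} ≤ δ < ∏_{ℓ=1}^{k-1} λ_{i_ℓ}`. -/
def IsDeltaStopping {N : ℕ} (lam : Fin N → ℝ) (δ : ℝ) (i : ℕ → Fin N) (k : ℕ) : Prop :=
  1 ≤ k ∧ (∏ ℓ ∈ Finset.range k, lam (i ℓ)) ≤ δ ∧
    δ < ∏ ℓ ∈ Finset.range (k - 1), lam (i ℓ)

/-- The symbolic Moran cover `B_δ`: finite words `w` such that every infinite
sequence extending `w` has `δ`-stopping equal to the length of `w`. -/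
def moranCover {N : ℕ} (lam : Fin N → ℝ) (δ : ℝ) : Set (List (Fin N)) :=
  {w | ∀ i : ℕ → Fin N, (∀ ℓ (h : ℓ < w.length), i ℓ = w.get ⟨ℓ, h⟩) →
    IsDeltaStopping lam δ i w.length}

/-- The type of a finite word: the vector of relative frequencies of its letters. -/
def typeOf {N : ℕ} (w : List (Fin N)) : Fin N → ℝ :=
  fun a => (w.count a : ℝ) / (w.length : ℝ)

/-!
Words of the Moran cover form a prefix-free code, and a word `w` of type `p` has weight
`exp (-|w| H(p))` for the Bernoulli measure of parameter `p`. By Kraft's inequality at most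
`exp (k H(p))` words of type `p` and length at most `k` lie in the cover. The stopping rule gives
`-log δ ≤ |w| χ(p) ≤ -log δ + M` with `M = max (-log λ_i)`, which turns this into the upper bound.

For the lower bound, let `n i` be the number of occurrences of the letter `i` in `w`. The number
of rearrangements of `w` is a multinomial coefficient, and it is at least
`(|w| + 1) ^ (1 - N) * exp (|w| H(p))`, because the term with exponents `n` is the largest one in
the multinomial expansion of `(∑ i, n i) ^ (∑ i, n i)`. Not all rearrangements lie in the cover,
but those with the same last letter as `w` do; fixing the last letter loses a factor of at most
`|w|`.
-/

open scoped Nat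

section Kraft

variable {α : Type*} [Fintype α]

lemma sum_eq_sum_sum_preimage_cons {M : Type*} [AddCommMonoid M] {S : Finset (List α)}
    (hS : [] ∉ S) (g : List α → M) :
    ∑ w ∈ S, g w =
      ∑ a, ∑ v ∈ S.preimage (a :: ·) List.cons_injective.injOn, g (a :: v) := by
  rw [Finset.sum_sigma']
  refine (Finset.sum_nbij (fun x : (_ : α) × List α ↦ x.1 :: x.2) ?_ ?_ ?_ fun _ _ ↦ rfl).symm
  · rintro ⟨a, v⟩ h
    simpa using h
  · rintro ⟨a, v⟩ - ⟨b, u⟩ - h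
    simpa using h
  · rintro (_ | ⟨a, v⟩) h
    · exact absurd h hS
    · exact ⟨⟨a, v⟩, by simpa using h, rfl⟩

lemma sum_prod_map_le_one_of_isAntichain_prefix {R : Type*} [Semiring R] [PartialOrder R]
    [IsOrderedRing R] {p : α → R} (hp₀ : ∀ a, 0 ≤ p a) (hp₁ : ∑ a, p a ≤ 1)
    {S : Finset (List α)} (hS : IsAntichain (· <+: ·) (S : Set (List α))) :
    ∑ w ∈ S, (w.map p).prod ≤ 1 := by
  obtain ⟨n, hn⟩ : ∃ n, ∀ w ∈ S, w.length ≤ n :=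
    ⟨S.sup List.length, fun w hw ↦ Finset.le_sup (f := List.length) hw⟩
  induction n generalizing S with
  | zero =>
    have hS' : S ⊆ {[]} := fun w hw ↦ by simpa using hn w hw
    rcases Finset.subset_singleton_iff.1 hS' with rfl | rfl <;> simp
  | succ n ih =>
    by_cases hnil : [] ∈ S
    · have hS' : S = {[]} := Finset.eq_singleton_iff_unique_mem.2
        ⟨hnil, fun w hw ↦ (hS.eq hnil hw w.nil_prefix).symm⟩
      simp [hS']
    · have hsub (a : α) :
          ∑ v ∈ S.preimage (a :: ·) List.cons_injective.injOn, (v.map p).prod ≤ 1 := by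
        refine ih (fun u hu v hv huv hpre ↦ ?_) fun v hv ↦ ?_
        · exact hS (by simpa using hu) (by simpa using hv) (by simpa using huv)
            (List.cons_prefix_cons.2 ⟨rfl, hpre⟩)
        · simpa using hn _ (Finset.mem_preimage.1 hv)
      calc ∑ w ∈ S, (w.map p).prod
          = ∑ a, p a * ∑ v ∈ S.preimage (a :: ·) List.cons_injective.injOn, (v.map p).prod := by
            simp only [sum_eq_sum_sum_preimage_cons hnil, List.map_cons, List.prod_cons,
              Finset.mul_sum]
        _ ≤ ∑ a, p a := Finset.sum_le_sum fun a _ ↦ mul_le_of_le_one_right (hp₀ a) (hsub a)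
        _ ≤ 1 := hp₁

end Kraft

section Multinomial

variable {ι : Type*}

lemma factorial_mul_pow_le (a b : ℕ) : a ! * a ^ b ≤ b ! * a ^ a := by
  rcases le_total a b with h | h
  · calc a ! * a ^ b = a ! * a ^ (b - a) * a ^ a := by
          rw [mul_assoc, ← pow_add, Nat.sub_add_cancel h]
      _ ≤ b ! * a ^ a := Nat.mul_le_mul_right _ (Nat.factorial_mul_pow_sub_le_factorial h)
  · have hdesc : b ! * a.descFactorial (a - b) = a ! := by
      simpa only [Nat.sub_sub_self h] using Nat.factorial_mul_descFactorial (Nat.sub_le a b)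
    calc a ! * a ^ b = b ! * (a.descFactorial (a - b) * a ^ b) := by rw [← hdesc, mul_assoc]
      _ ≤ b ! * (a ^ (a - b) * a ^ b) := by gcongr; exact Nat.descFactorial_le_pow a (a - b)
      _ = b ! * a ^ a := by rw [← pow_add, Nat.sub_add_cancel h]

lemma multinomial_mul_prod_pow_le {s : Finset ι} {f n : ι → ℕ} (h : ∑ i ∈ s, f i = ∑ i ∈ s, n i) :
    Nat.multinomial s f * ∏ i ∈ s, n i ^ f i ≤ Nat.multinomial s n * ∏ i ∈ s, n i ^ n i := by
  have hfac : (∏ i ∈ s, (n i)!) * ∏ i ∈ s, n i ^ f i ≤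
      (∏ i ∈ s, (f i)!) * ∏ i ∈ s, n i ^ n i := by
    simp only [← Finset.prod_mul_distrib]
    exact Finset.prod_le_prod' fun i _ ↦ factorial_mul_pow_le (n i) (f i)
  have hmul : (∏ i ∈ s, (f i)!) * Nat.multinomial s f =
      (∏ i ∈ s, (n i)!) * Nat.multinomial s n := by
    rw [Nat.multinomial_spec, Nat.multinomial_spec, h]
  have hpos : 0 < (∏ i ∈ s, (f i)!) * ∏ i ∈ s, (n i)! := by positivity
  refine Nat.le_of_mul_le_mul_left ?_ hpos
  calc (∏ i ∈ s, (f i)!) * (∏ i ∈ s, (n i)!) * (Nat.multinomial s f * ∏ i ∈ s, n i ^ f i)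
      = ((∏ i ∈ s, (f i)!) * Nat.multinomial s f) *
          ((∏ i ∈ s, (n i)!) * ∏ i ∈ s, n i ^ f i) := by ring
    _ ≤ ((∏ i ∈ s, (n i)!) * Nat.multinomial s n) *
          ((∏ i ∈ s, (f i)!) * ∏ i ∈ s, n i ^ n i) := by rw [hmul]; gcongr
    _ = (∏ i ∈ s, (f i)!) * (∏ i ∈ s, (n i)!) *
          (Nat.multinomial s n * ∏ i ∈ s, n i ^ n i) := by ring

lemma card_piAntidiag_le [DecidableEq ι] (s : Finset ι) (k : ℕ) :
    #(s.piAntidiag k) ≤ (k + 1) ^ (#s - 1) := by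
  induction s using Finset.cons_induction generalizing k with
  | empty => rw [Finset.piAntidiag_empty]; split_ifs <;> simp
  | cons i s hi ih =>
    rcases s.eq_empty_or_nonempty with rfl | hs
    · have hsub : ({i} : Finset ι).piAntidiag k ⊆ {Pi.single i k} := by
        intro f hf
        obtain ⟨hsum, hsupp⟩ := Finset.mem_piAntidiag.1 hf
        simp only [Finset.sum_singleton, Finset.mem_singleton] at hsum hsupp
        refine Finset.mem_singleton.2 (funext fun j ↦ ?_)
        rcases eq_or_ne j i with rfl | hj
        · rw [hsum, Pi.single_eq_same]
        · rw [Pi.single_eq_of_ne hj, not_imp_comm.1 (hsupp j) hj]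
      simpa using Finset.card_le_card hsub
    have hle (p : ℕ × ℕ) (hp : p ∈ HasAntidiagonal.antidiagonal k) :
        #(s.piAntidiag p.2) ≤ (k + 1) ^ (#s - 1) :=
      (ih p.2).trans <| by gcongr; have := HasAntidiagonal.mem_antidiagonal.1 hp; omega
    calc #((Finset.cons i s hi).piAntidiag k)
        = ∑ p ∈ HasAntidiagonal.antidiagonal k, #(s.piAntidiag p.2) := by
          rw [Finset.piAntidiag_cons hi, Finset.card_disjiUnion]
          simp only [Finset.card_map]
      _ ≤ (k + 1) * (k + 1) ^ (#s - 1) := by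
          simpa using Finset.sum_le_card_nsmul _ _ _ hle
      _ = (k + 1) ^ (#(Finset.cons i s hi) - 1) := by
          rw [← pow_succ', Nat.sub_add_cancel hs.card_pos, Finset.card_cons, Nat.add_sub_cancel]

lemma sum_pow_sum_le_mul_multinomial (s : Finset ι) (n : ι → ℕ) :
    (∑ i ∈ s, n i) ^ (∑ i ∈ s, n i) ≤
      (∑ i ∈ s, n i + 1) ^ (#s - 1) * (Nat.multinomial s n * ∏ i ∈ s, n i ^ n i) := by
  classical
  rw [Finset.sum_pow_eq_sum_piAntidiag]
  calc ∑ f ∈ s.piAntidiag (∑ i ∈ s, n i), Nat.multinomial s f * ∏ i ∈ s, n i ^ f i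
      ≤ #(s.piAntidiag (∑ i ∈ s, n i)) * (Nat.multinomial s n * ∏ i ∈ s, n i ^ n i) :=
        Finset.sum_le_card_nsmul _ _ _ fun f hf ↦
          multinomial_mul_prod_pow_le (Finset.mem_piAntidiag.1 hf).1
    _ ≤ _ := Nat.mul_le_mul_right _ (card_piAntidiag_le s _)

end Multinomial

section Permutations

variable {α : Type*} [DecidableEq α]

lemma card_permutations_toFinset_eq_sum_erase {w : List α} (hw : w ≠ []) :
    #w.permutations.toFinset = ∑ a ∈ w.toFinset, #(w.erase a).permutations.toFinset := by
  have hunion : w.permutations.toFinset =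
      w.toFinset.biUnion fun a ↦ (w.erase a).permutations.toFinset.image (a :: ·) := by
    ext (_ | ⟨a, u⟩)
    · simp [hw]
    · simp [List.cons_perm_iff_perm_erase]
  rw [hunion, Finset.card_biUnion]
  · exact Finset.sum_congr rfl fun a _ ↦ Finset.card_image_of_injective _ List.cons_injective
  · intro a _ b _ hab
    simp only [Finset.disjoint_left, Finset.mem_image, not_exists, not_and]
    rintro _ ⟨u, _, rfl⟩ v _ h
    exact hab (List.cons.inj h).1.symm

lemma card_permutations_toFinset_cons_le (a : α) (v : List α) :
    #(a :: v).permutations.toFinset ≤ (v.length + 1) * #v.permutations.toFinset := by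
  have hinsert : (a :: v).permutations.toFinset =
      v.permutations.toFinset.biUnion fun u ↦ (List.permutations'Aux a u).toFinset := by
    rw [List.toFinset_eq_of_perm _ _ (List.permutations_perm_permutations' (a :: v)),
      List.toFinset_eq_of_perm _ _ (List.permutations_perm_permutations' v)]
    ext u
    simp [List.permutations']
  rw [hinsert, mul_comm]
  refine Finset.card_biUnion_le_card_mul _ _ _ fun u hu ↦ ?_
  calc #(List.permutations'Aux a u).toFinset ≤ (List.permutations'Aux a u).length :=
        List.toFinset_card_le _
    _ = v.length + 1 := by
        rw [List.length_permutations'Aux,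
          (List.mem_permutations.1 (List.mem_toFinset.1 hu)).length_eq]

variable [Fintype α]

lemma sum_count_eq_length (w : List α) : ∑ a, w.count a = w.length := by
  simpa using Multiset.sum_count_eq_card (s := Finset.univ) (m := (w : Multiset α)) (by simp)

lemma prod_map_eq_prod_pow_count {M : Type*} [CommMonoid M] (w : List α) (f : α → M) :
    (w.map f).prod = ∏ a, f a ^ w.count a := by
  rw [Finset.prod_list_map_count]
  exact Finset.prod_subset (Finset.subset_univ _) fun a _ ha ↦ by
    rw [List.count_eq_zero_of_not_mem (by simpa using ha), pow_zero]

lemma prod_factorial_count_eq_count_mul {w : List α} {a : α} (ha : a ∈ w) :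
    ∏ b, (w.count b)! = w.count a * ∏ b, ((w.erase a).count b)! := by
  have hcount (b : α) :
      (w.count b)! = (if a = b then w.count a else 1) * ((w.erase a).count b)! := by
    split_ifs with h
    · subst h
      rw [List.count_erase_self, Nat.mul_factorial_pred (List.count_pos_iff.2 ha).ne']
    · rw [List.count_erase_of_ne (Ne.symm h), one_mul]
  simp only [hcount, Finset.prod_mul_distrib, Finset.prod_ite_eq, Finset.mem_univ, if_true]

lemma card_permutations_toFinset_mul_prod_factorial_count (w : List α) :
    #w.permutations.toFinset * ∏ a, (w.count a)! = w.length ! := by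
  induction h : w.length generalizing w with
  | zero => simp [List.length_eq_zero_iff.1 h]
  | succ k ih =>
    have herase : ∀ a ∈ w.toFinset,
        #(w.erase a).permutations.toFinset * ∏ b, (w.count b)! = w.count a * k ! := by
      intro a ha
      have ha' := List.mem_toFinset.1 ha
      rw [prod_factorial_count_eq_count_mul ha', mul_left_comm,
        ih (w.erase a) (by rw [List.length_erase_of_mem ha', h, Nat.add_sub_cancel])]
    rw [card_permutations_toFinset_eq_sum_erase (List.ne_nil_of_length_eq_add_one h),
      Finset.sum_mul, Finset.sum_congr rfl herase, ← Finset.sum_mul,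
      List.sum_toFinset_count_eq_length, h, Nat.factorial_succ]

lemma card_permutations_toFinset_eq_multinomial (w : List α) :
    #w.permutations.toFinset = Nat.multinomial Finset.univ (w.count ·) := by
  have hpos : 0 < ∏ a, (w.count a)! := by positivity
  refine Nat.eq_of_mul_eq_mul_right hpos ?_
  rw [card_permutations_toFinset_mul_prod_factorial_count, mul_comm, Nat.multinomial_spec,
    sum_count_eq_length]

end Permutations

section Types

variable {N : ℕ}

lemma typeOf_eq_of_perm {u w : List (Fin N)} (h : u.Perm w) : typeOf u = typeOf w := by
  funext a
  simp only [typeOf, h.count_eq, h.length_eq]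

lemma length_mul_typeOf (w : List (Fin N)) (a : Fin N) : w.length * typeOf w a = w.count a := by
  rcases eq_or_ne w [] with rfl | hw
  · simp
  · exact mul_div_cancel₀ _ (Nat.cast_ne_zero.2 (List.length_pos_iff.2 hw).ne')

lemma typeOf_mem_stdSimplex {w : List (Fin N)} (hw : w ≠ []) :
    typeOf w ∈ stdSimplex ℝ (Fin N) := by
  have hlen : (w.length : ℝ) ≠ 0 := Nat.cast_ne_zero.2 (List.length_pos_iff.2 hw).ne'
  refine ⟨fun a ↦ by unfold typeOf; positivity, mul_left_cancel₀ hlen ?_⟩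
  rw [Finset.mul_sum, mul_one]
  simp only [length_mul_typeOf]
  exact_mod_cast sum_count_eq_length w

lemma prod_map_eq_exp_neg_length_mul_chiF {lam : Fin N → ℝ} {w : List (Fin N)}
    (hlam : ∀ a ∈ w, 0 < lam a) :
    (w.map lam).prod = exp (-(w.length * chiF lam (typeOf w))) := by
  have hpow (a : Fin N) : lam a ^ w.count a = exp (w.count a * log (lam a)) := by
    by_cases ha : a ∈ w
    · rw [exp_nat_mul, exp_log (hlam a ha)]
    · simp [List.count_eq_zero_of_not_mem ha]
  simp only [prod_map_eq_prod_pow_count, hpow, ← exp_sum, chiF, mul_neg, neg_neg, Finset.mul_sum,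
    ← mul_assoc, length_mul_typeOf]

lemma prod_map_typeOf_eq_exp_neg_length_mul_entF (w : List (Fin N)) :
    (w.map (typeOf w)).prod = exp (-(w.length * entF (typeOf w))) := by
  -- `entF p` unfolds to `chiF p p`
  refine prod_map_eq_exp_neg_length_mul_chiF fun a ha ↦ div_pos ?_ ?_
  · exact Nat.cast_pos.2 (List.count_pos_iff.2 ha)
  · exact Nat.cast_pos.2 (List.length_pos_of_mem ha)

lemma entF_eq_sum_negMulLog (p : Fin N → ℝ) : entF p = ∑ i, negMulLog (p i) := by
  simp only [entF, negMulLog, neg_mul, Finset.sum_neg_distrib]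

lemma entF_nonneg {p : Fin N → ℝ} (hp : p ∈ stdSimplex ℝ (Fin N)) : 0 ≤ entF p := by
  rw [entF_eq_sum_negMulLog]
  exact Finset.sum_nonneg fun i _ ↦
    negMulLog_nonneg (hp.1 i) (mem_Icc_of_mem_stdSimplex hp i).2

lemma entF_le_sub_one {p : Fin N → ℝ} (hp : p ∈ stdSimplex ℝ (Fin N)) : entF p ≤ N - 1 := by
  calc entF p ≤ ∑ i, (1 - p i) := by
        rw [entF_eq_sum_negMulLog]
        exact Finset.sum_le_sum fun i _ ↦ negMulLog_le_one_sub_self (hp.1 i)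
    _ = N - 1 := by simp [Finset.sum_sub_distrib, hp.2]

lemma le_chiF {lam p : Fin N → ℝ} {m : ℝ} (hm : ∀ i, m ≤ -log (lam i))
    (hp : p ∈ stdSimplex ℝ (Fin N)) : m ≤ chiF lam p := by
  calc m = ∑ i, p i * m := by rw [← Finset.sum_mul, hp.2, one_mul]
    _ ≤ ∑ i, p i * -log (lam i) :=
        Finset.sum_le_sum fun i _ ↦ mul_le_mul_of_nonneg_left (hm i) (hp.1 i)
    _ = chiF lam p := by simp only [chiF, mul_neg, Finset.sum_neg_distrib]

lemma exp_length_mul_entF_le_mul_card_permutations (w : List (Fin N)) :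
    exp (w.length * entF (typeOf w)) ≤
      (w.length + 1 : ℝ) ^ (N - 1) * #w.permutations.toFinset := by
  have hcount : (w.length : ℝ) ^ w.length ≤ (w.length + 1 : ℝ) ^ (N - 1) *
      (#w.permutations.toFinset * ∏ a, (w.count a : ℝ) ^ w.count a) := by
    have := sum_pow_sum_le_mul_multinomial Finset.univ (w.count ·)
    rw [sum_count_eq_length, ← card_permutations_toFinset_eq_multinomial, Finset.card_univ,
      Fintype.card_fin] at this
    exact_mod_cast this
  have hprod : ∏ a, (w.count a : ℝ) ^ w.count a =
      (w.length : ℝ) ^ w.length * exp (-(w.length * entF (typeOf w))) := by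
    simp only [← prod_map_typeOf_eq_exp_neg_length_mul_entF, prod_map_eq_prod_pow_count,
      ← length_mul_typeOf, mul_pow, Finset.prod_mul_distrib, Finset.prod_pow_eq_pow_sum,
      sum_count_eq_length]
  have hpos : (0 : ℝ) < (w.length : ℝ) ^ w.length := by
    exact_mod_cast Nat.pow_self_pos
  rw [hprod, exp_neg] at hcount
  refine le_of_mul_le_mul_left ?_ hpos
  calc (w.length : ℝ) ^ w.length * exp (w.length * entF (typeOf w))
      ≤ (w.length + 1 : ℝ) ^ (N - 1) * (#w.permutations.toFinset *
          (w.length ^ w.length * (exp (w.length * entF (typeOf w)))⁻¹)) *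
          exp (w.length * entF (typeOf w)) := by gcongr
    _ = w.length ^ w.length * ((w.length + 1 : ℝ) ^ (N - 1) * #w.permutations.toFinset) := by
      field_simp

lemma card_le_exp_mul_entF_of_isAntichain_prefix {p : Fin N → ℝ}
    (hp : p ∈ stdSimplex ℝ (Fin N)) {S : Finset (List (Fin N))}
    (hS : IsAntichain (· <+: ·) (S : Set (List (Fin N)))) (htype : ∀ w ∈ S, typeOf w = p) {k : ℝ}
    (hk : ∀ w ∈ S, (w.length : ℝ) ≤ k) :
    (#S : ℝ) ≤ exp (k * entF p) := by
  have hweight : ∀ w ∈ S, exp (-(k * entF p)) ≤ (w.map p).prod := fun w hw ↦ by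
    have hprod := prod_map_typeOf_eq_exp_neg_length_mul_entF w
    rw [htype w hw] at hprod
    rw [hprod]
    gcongr
    exacts [entF_nonneg hp, hk w hw]
  have hle : #S * exp (-(k * entF p)) ≤ 1 := by
    rw [← nsmul_eq_mul]
    exact (Finset.card_nsmul_le_sum _ _ _ hweight).trans
      (sum_prod_map_le_one_of_isAntichain_prefix hp.1 hp.2.le hS)
  rwa [exp_neg, ← div_eq_mul_inv, div_le_one (exp_pos _)] at hle

end Types

section MoranCover

variable {N : ℕ} {lam : Fin N → ℝ} {δ : ℝ}

lemma prod_range_length_eq_prod_map {w : List (Fin N)} {i : ℕ → Fin N}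
    (hi : ∀ ℓ (h : ℓ < w.length), i ℓ = w.get ⟨ℓ, h⟩) (lam : Fin N → ℝ) :
    ∏ ℓ ∈ Finset.range w.length, lam (i ℓ) = (w.map lam).prod := by
  rw [Finset.prod_range, ← Fin.prod_univ_fun_getElem]
  exact Finset.prod_congr rfl fun ℓ _ ↦ by rw [hi ℓ ℓ.2, List.get_eq_getElem]

lemma isDeltaStopping_concat_iff {v : List (Fin N)} {a : Fin N} {i : ℕ → Fin N}
    (hi : ∀ ℓ (h : ℓ < (v ++ [a]).length), i ℓ = (v ++ [a]).get ⟨ℓ, h⟩) :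
    IsDeltaStopping lam δ i (v ++ [a]).length ↔
      (v.map lam).prod * lam a ≤ δ ∧ δ < (v.map lam).prod := by
  have hv : ∀ ℓ (h : ℓ < v.length), i ℓ = v.get ⟨ℓ, h⟩ := fun ℓ h ↦ by
    rw [hi ℓ (by simp; omega), List.get_eq_getElem, List.getElem_append_left h,
      List.get_eq_getElem]
  have hlen : (v ++ [a]).length - 1 = v.length := by simp
  rw [IsDeltaStopping, prod_range_length_eq_prod_map hi, hlen, prod_range_length_eq_prod_map hv]
  simp

lemma concat_mem_moranCover_iff {v : List (Fin N)} {a : Fin N} :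
    v ++ [a] ∈ moranCover lam δ ↔ (v.map lam).prod * lam a ≤ δ ∧ δ < (v.map lam).prod := by
  refine ⟨fun h ↦ ?_, fun h i hi ↦ (isDeltaStopping_concat_iff hi).2 h⟩
  have hi : ∀ ℓ (h : ℓ < (v ++ [a]).length), (v ++ [a]).getD ℓ a = (v ++ [a]).get ⟨ℓ, h⟩ :=
    fun ℓ h ↦ List.getD_eq_getElem _ _ h
  exact (isDeltaStopping_concat_iff hi).1 (h _ hi)

lemma ne_nil_of_mem_moranCover [NeZero N] {w : List (Fin N)} (hw : w ∈ moranCover lam δ) :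
    w ≠ [] := by
  rintro rfl
  exact absurd (hw (fun _ ↦ 0) (fun ℓ h ↦ absurd h ℓ.not_lt_zero)).1 (by simp)

lemma exists_eq_concat_of_mem_moranCover [NeZero N] {w : List (Fin N)}
    (hw : w ∈ moranCover lam δ) :
    ∃ v a, w = v ++ [a] ∧ (v.map lam).prod * lam a ≤ δ ∧ δ < (v.map lam).prod := by
  obtain ⟨v, a, rfl⟩ := (List.eq_nil_or_concat' w).resolve_left (ne_nil_of_mem_moranCover hw)
  exact ⟨v, a, rfl, concat_mem_moranCover_iff.1 hw⟩

lemma isAntichain_moranCover [NeZero N] (hlam : ∀ i, lam i ∈ Set.Icc 0 1) :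
    IsAntichain (· <+: ·) (moranCover lam δ) := by
  intro u hu w hw hne hpre
  obtain ⟨v, a, rfl, -, hv⟩ := exists_eq_concat_of_mem_moranCover hw
  obtain ⟨u, b, rfl, hub, -⟩ := exists_eq_concat_of_mem_moranCover hu
  obtain ⟨t, rfl⟩ := (List.prefix_concat_iff.1 hpre).resolve_left hne
  have hnonneg (l : List (Fin N)) : 0 ≤ (l.map lam).prod :=
    List.prod_nonneg <| List.forall_mem_map.2 fun i _ ↦ (hlam i).1
  have ht : (t.map lam).prod ≤ 1 := by
    rw [prod_map_eq_prod_pow_count]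
    exact Finset.prod_le_one (fun i _ ↦ pow_nonneg (hlam i).1 _)
      fun i _ ↦ pow_le_one₀ (hlam i).1 (hlam i).2
  refine hv.not_ge ?_
  calc (((u ++ [b]) ++ t).map lam).prod = ((u.map lam).prod * lam b) * (t.map lam).prod := by
        simp [mul_assoc]
    _ ≤ (u.map lam).prod * lam b :=
        mul_le_of_le_one_right (mul_nonneg (hnonneg u) (hlam b).1) ht
    _ ≤ δ := hub

lemma neg_log_le_length_mul_chiF [NeZero N] (hlam : ∀ i, 0 < lam i) {w : List (Fin N)}
    (hw : w ∈ moranCover lam δ) : -log δ ≤ w.length * chiF lam (typeOf w) := by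
  obtain ⟨v, a, rfl, hle, -⟩ := exists_eq_concat_of_mem_moranCover hw
  have hexp : exp (-((v ++ [a]).length * chiF lam (typeOf (v ++ [a])))) ≤ δ := by
    rw [← prod_map_eq_exp_neg_length_mul_chiF fun i _ ↦ hlam i]
    simpa using hle
  exact neg_le.1 ((le_log_iff_exp_le ((exp_pos _).trans_le hexp)).2 hexp)

lemma length_mul_chiF_le [NeZero N] (hlam : ∀ i, 0 < lam i) (hδ : 0 < δ) {M : ℝ}
    (hM : ∀ i, -log (lam i) ≤ M) {w : List (Fin N)} (hw : w ∈ moranCover lam δ) :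
    w.length * chiF lam (typeOf w) ≤ -log δ + M := by
  obtain ⟨v, a, rfl, -, hlt⟩ := exists_eq_concat_of_mem_moranCover hw
  have hexp : δ * lam a < exp (-((v ++ [a]).length * chiF lam (typeOf (v ++ [a])))) := by
    rw [← prod_map_eq_exp_neg_length_mul_chiF fun i _ ↦ hlam i]
    simpa using mul_lt_mul_of_pos_right hlt (hlam a)
  have hlog := (log_lt_iff_lt_exp (mul_pos hδ (hlam a))).2 hexp
  rw [log_mul hδ.ne' (hlam a).ne'] at hlog
  linarith [hM a]

end MoranCover

section TypeClass

variable {N : ℕ} {lam p : Fin N → ℝ} {δ : ℝ}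

/-- The type class `T_δ(p)`: the words of type `p` in the Moran cover. It is defined for every
vector `p`, and is empty unless `p ∈ T_δ`. -/
def typeClass (lam : Fin N → ℝ) (δ : ℝ) (p : Fin N → ℝ) : Set (List (Fin N)) :=
  {w | w ∈ moranCover lam δ ∧ typeOf w = p}

lemma card_permutations_le_length_mul_ncard_typeClass [NeZero N] {w : List (Fin N)}
    (hw : w ∈ typeClass lam δ p) (hfin : (typeClass lam δ p).Finite) :
    #w.permutations.toFinset ≤ w.length * (typeClass lam δ p).ncard := by
  obtain ⟨hw, rfl⟩ := hw
  obtain ⟨v, a, rfl, hv⟩ := exists_eq_concat_of_mem_moranCover hw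
  -- membership in the cover depends only on the last letter and the type of the rest
  have hmaps : ∀ u ∈ (v.permutations.toFinset : Set (List (Fin N))),
      u ++ [a] ∈ typeClass lam δ (typeOf (v ++ [a])) := by
    intro u hu
    have hperm : u.Perm v := by simpa using hu
    refine ⟨concat_mem_moranCover_iff.2 ?_, typeOf_eq_of_perm (hperm.append_right [a])⟩
    rwa [(hperm.map lam).prod_eq]
  have hcard : #v.permutations.toFinset ≤ (typeClass lam δ (typeOf (v ++ [a]))).ncard := by
    rw [← Set.ncard_coe_finset]
    exact Set.ncard_le_ncard_of_injOn _ hmaps (List.append_left_injective [a]).injOn hfin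
  calc #(v ++ [a]).permutations.toFinset = #(a :: v).permutations.toFinset := by
        rw [List.toFinset_eq_of_perm _ _ (List.perm_append_singleton a v).permutations]
    _ ≤ (v.length + 1) * #v.permutations.toFinset := card_permutations_toFinset_cons_le a v
    _ ≤ (v ++ [a]).length * (typeClass lam δ (typeOf (v ++ [a]))).ncard := by
        simpa using Nat.mul_le_mul_left (v.length + 1) hcard

lemma mem_stdSimplex_of_nonempty_typeClass [NeZero N] (h : (typeClass lam δ p).Nonempty) :
    p ∈ stdSimplex ℝ (Fin N) := by
  obtain ⟨w, hw, rfl⟩ := h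
  exact typeOf_mem_stdSimplex (ne_nil_of_mem_moranCover hw)

lemma isAntichain_typeClass [NeZero N] (hlam : ∀ i, lam i ∈ Set.Icc 0 1) :
    IsAntichain (· <+: ·) (typeClass lam δ p) :=
  (isAntichain_moranCover hlam).subset fun _ hw ↦ hw.1

lemma length_le_of_mem_typeClass [NeZero N] (hlam : ∀ i, 0 < lam i) (hδ : 0 < δ) {M : ℝ}
    (hM : ∀ i, -log (lam i) ≤ M) (hχ : 0 < chiF lam p) {w : List (Fin N)}
    (hw : w ∈ typeClass lam δ p) : w.length ≤ (-log δ + M) / chiF lam p := by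
  obtain ⟨hw, rfl⟩ := hw
  exact (le_div_iff₀ hχ).2 (length_mul_chiF_le hlam hδ hM hw)

lemma finite_typeClass [NeZero N] (hlam : ∀ i, 0 < lam i) (hδ : 0 < δ) (hχ : 0 < chiF lam p) :
    (typeClass lam δ p).Finite := by
  obtain ⟨j, hj⟩ := Finite.exists_max fun i ↦ -log (lam i)
  refine (List.finite_length_le (Fin N) ⌊(-log δ + -log (lam j)) / chiF lam p⌋₊).subset ?_
  exact fun w hw ↦ Nat.le_floor (length_le_of_mem_typeClass hlam hδ hj hχ hw)

lemma exp_length_mul_entF_le_mul_ncard_typeClass [NeZero N] {w : List (Fin N)}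
    (hw : w ∈ typeClass lam δ p) (hfin : (typeClass lam δ p).Finite) :
    exp (w.length * entF p) ≤ (w.length + 1 : ℝ) ^ N * (typeClass lam δ p).ncard := by
  have hperm : (#w.permutations.toFinset : ℝ) ≤ w.length * (typeClass lam δ p).ncard :=
    mod_cast card_permutations_le_length_mul_ncard_typeClass hw hfin
  calc exp (w.length * entF p)
      ≤ (w.length + 1 : ℝ) ^ (N - 1) * #w.permutations.toFinset :=
        hw.2 ▸ exp_length_mul_entF_le_mul_card_permutations w
    _ ≤ (w.length + 1 : ℝ) ^ (N - 1) * ((w.length + 1) * (typeClass lam δ p).ncard) := by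
        gcongr
        exact hperm.trans (by gcongr; linarith)
    _ = (w.length + 1 : ℝ) ^ N * (typeClass lam δ p).ncard := by
        rw [← mul_assoc, ← pow_succ, Nat.sub_add_cancel NeZero.one_le]

lemma rpow_neg_entF_div_chiF (hδ : 0 < δ) :
    δ ^ (-(entF p / chiF lam p)) = exp (-log δ / chiF lam p * entF p) := by
  rw [rpow_def_of_pos hδ]
  ring_nf

lemma ncard_typeClass_le_mul_rpow [NeZero N] (hlam : ∀ i, lam i ∈ Set.Ioo 0 1) (hδ : 0 < δ)
    {m M : ℝ} (hm₀ : 0 < m) (hm : ∀ i, m ≤ -log (lam i)) (hM : ∀ i, -log (lam i) ≤ M)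
    (hp : p ∈ stdSimplex ℝ (Fin N)) :
    (typeClass lam δ p).ncard ≤ exp (M / m * (N - 1)) * δ ^ (-(entF p / chiF lam p)) := by
  have hmχ : m ≤ chiF lam p := le_chiF hm hp
  have hχ : 0 < chiF lam p := hm₀.trans_le hmχ
  have hM₀ : 0 ≤ M := (hm₀.le.trans (hm 0)).trans (hM 0)
  have hpos (i : Fin N) : 0 < lam i := (hlam i).1
  have hfin := finite_typeClass hpos hδ hχ
  calc ((typeClass lam δ p).ncard : ℝ)
      ≤ exp ((-log δ + M) / chiF lam p * entF p) := by
        rw [Set.ncard_eq_toFinset_card _ hfin]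
        refine card_le_exp_mul_entF_of_isAntichain_prefix hp ?_ ?_ ?_
        · simpa using isAntichain_typeClass fun i ↦ Set.Ioo_subset_Icc_self (hlam i)
        · exact fun w hw ↦ ((hfin.mem_toFinset).1 hw).2
        · exact fun w hw ↦ length_le_of_mem_typeClass hpos hδ hM hχ (hfin.mem_toFinset.1 hw)
    _ = exp (M / chiF lam p * entF p) * δ ^ (-(entF p / chiF lam p)) := by
        rw [rpow_neg_entF_div_chiF hδ, ← exp_add]
        ring_nf
    _ ≤ exp (M / m * (N - 1)) * δ ^ (-(entF p / chiF lam p)) := by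
        gcongr
        exacts [entF_nonneg hp, entF_le_sub_one hp]

lemma length_add_one_le_of_mem_typeClass [NeZero N] (hlam : ∀ i, 0 < lam i)
    (hδ : δ ∈ Set.Ioo 0 1) {m M : ℝ} (hm₀ : 0 < m) (hm : ∀ i, m ≤ -log (lam i))
    (hM : ∀ i, -log (lam i) ≤ M) {w : List (Fin N)} (hw : w ∈ typeClass lam δ p) :
    (w.length + 1 : ℝ) ≤ (1 + M / m) * (1 + -log δ / chiF lam p) := by
  have hmχ : m ≤ chiF lam p := le_chiF hm (mem_stdSimplex_of_nonempty_typeClass ⟨w, hw⟩)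
  have hχ : 0 < chiF lam p := hm₀.trans_le hmχ
  have hM₀ : 0 ≤ M := (hm₀.le.trans (hm 0)).trans (hM 0)
  have hlog : 0 ≤ -log δ := neg_nonneg.2 (log_nonpos hδ.1.le hδ.2.le)
  calc (w.length + 1 : ℝ) ≤ (-log δ + M) / chiF lam p + 1 := by
        gcongr
        exact length_le_of_mem_typeClass hlam hδ.1 hM hχ hw
    _ = 1 + -log δ / chiF lam p + M / chiF lam p * 1 := by ring
    _ ≤ 1 + -log δ / chiF lam p + M / m * (1 + -log δ / chiF lam p) := by
        gcongr
        exact le_add_of_nonneg_right (by positivity)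
    _ = (1 + M / m) * (1 + -log δ / chiF lam p) := by ring

lemma rpow_mul_rpow_le_mul_ncard_typeClass [NeZero N] (hlam : ∀ i, 0 < lam i)
    (hδ : δ ∈ Set.Ioo 0 1) {m M : ℝ} (hm₀ : 0 < m) (hm : ∀ i, m ≤ -log (lam i))
    (hM : ∀ i, -log (lam i) ≤ M) (h : (typeClass lam δ p).Nonempty) :
    (1 + -log δ / chiF lam p) ^ (-(N : ℝ)) * δ ^ (-(entF p / chiF lam p)) ≤
      (1 + M / m) ^ N * (typeClass lam δ p).ncard := by
  have hp := mem_stdSimplex_of_nonempty_typeClass h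
  have hχ : 0 < chiF lam p := hm₀.trans_le (le_chiF hm hp)
  have hlog : 0 ≤ -log δ := neg_nonneg.2 (log_nonpos hδ.1.le hδ.2.le)
  obtain ⟨w, hw⟩ := h
  have hlen : -log δ / chiF lam p ≤ w.length :=
    (div_le_iff₀ hχ).2 (hw.2 ▸ neg_log_le_length_mul_chiF hlam hw.1)
  rw [rpow_neg (by positivity), rpow_natCast, inv_mul_le_iff₀ (by positivity), ← mul_assoc,
    ← mul_pow, mul_comm (1 + -log δ / chiF lam p)]
  calc δ ^ (-(entF p / chiF lam p)) = exp (-log δ / chiF lam p * entF p) :=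
        rpow_neg_entF_div_chiF hδ.1
    _ ≤ exp (w.length * entF p) := by
        gcongr
        exact entF_nonneg hp
    _ ≤ (w.length + 1 : ℝ) ^ N * (typeClass lam δ p).ncard :=
        exp_length_mul_entF_le_mul_ncard_typeClass hw (finite_typeClass hlam hδ.1 hχ)
    _ ≤ ((1 + M / m) * (1 + -log δ / chiF lam p)) ^ N * (typeClass lam δ p).ncard := by
        gcongr
        exact length_add_one_le_of_mem_typeClass hlam hδ hm₀ hm hM hw

end TypeClass

/-- Size of a type class of the Moran cover: for every `δ ∈ (0,1)`
and every type `p ∈ T_δ`,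
`c⁻¹·(1+(-log δ)/χ(p))^{-N}·δ^{-H(p)/χ(p)} ≤ #T_δ(p) ≤ c·δ^{-H(p)/χ(p)}`. -/
theorem type_class_size
    (N : ℕ) (hN : 2 ≤ N)
    (lam : Fin N → ℝ) (hlam : ∀ i, lam i ∈ Set.Ioo (0:ℝ) 1) :
    ∃ c : ℝ, 1 ≤ c ∧
      ∀ δ : ℝ, δ ∈ Set.Ioo (0:ℝ) 1 → ∀ p : Fin N → ℝ,
        (∃ w ∈ moranCover lam δ, typeOf w = p) →
        c⁻¹ * (1 + (-Real.log δ) / chiF lam p) ^ (-(N : ℝ)) *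
            δ ^ (-(entF p / chiF lam p)) ≤
          ({w | w ∈ moranCover lam δ ∧ typeOf w = p}.ncard : ℝ) ∧
        ({w | w ∈ moranCover lam δ ∧ typeOf w = p}.ncard : ℝ) ≤
          c * δ ^ (-(entF p / chiF lam p)) := by
  have : NeZero N := ⟨by omega⟩
  have hpos (i : Fin N) : 0 < lam i := (hlam i).1
  obtain ⟨j, hm⟩ := Finite.exists_min fun i ↦ -log (lam i)
  obtain ⟨k, hM⟩ := Finite.exists_max fun i ↦ -log (lam i)
  set m := -log (lam j)
  set M := -log (lam k)
  have hm₀ : 0 < m := neg_pos.2 (log_neg (hlam j).1 (hlam j).2)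
  have hM₀ : 0 ≤ M := hm₀.le.trans (hM j)
  refine ⟨max ((1 + M / m) ^ N) (exp (M / m * (N - 1))), ?_, fun δ hδ p h ↦ ?_⟩
  · exact le_max_of_le_left (one_le_pow₀ (le_add_of_nonneg_right (by positivity)))
  change (typeClass lam δ p).Nonempty at h
  change _ ≤ ((typeClass lam δ p).ncard : ℝ) ∧ ((typeClass lam δ p).ncard : ℝ) ≤ _
  constructor
  · rw [mul_assoc, inv_mul_le_iff₀ (by positivity)]
    exact (rpow_mul_rpow_le_mul_ncard_typeClass hpos hδ hm₀ hm hM h).trans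
      (mul_le_mul_of_nonneg_right (le_max_left _ _) (Nat.cast_nonneg _))
  · exact (ncard_typeClass_le_mul_rpow hlam hδ.1 hm₀ hm hM
      (mem_stdSimplex_of_nonempty_typeClass h)).trans
      (mul_le_mul_of_nonneg_right (le_max_right _ _) (rpow_nonneg hδ.1.le _))
end
end
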